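/- If n > max(3^d, 2^{d+1} + 1) φ, then, with W := n − S the number of nonisolated points, there exists a coupling of W with a random variable W' having the W size-biased distribution such that |W' − W| ≤ κ_d + 1 almost surely and Var( E[W' − W | W] ) ≤ η_S(n,ρ)/n. -/

import Mathlib

open MeasureTheory ProbabilityTheory Filter Set Metric
open scoped ENNReal NNReal BigOperators Topology Classical

noncomputable section

/-- Side length `n^(1/d)` of the cube `C_n` of volume `n` in dimension `d`. -/
def sideLen (d n : ℕ) : ℝ := (n : ℝ) ^ ((d : ℝ)⁻¹)

/-- The cube `C_n = [0, L)^d`. -/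
def box (d : ℕ) (L : ℝ) : Set (Fin d → ℝ) := Set.univ.pi fun _ => Set.Ico (0 : ℝ) L

/-- The Euclidean toroidal distance on the cube `[0, L)^d`. -/
def torDist {d : ℕ} (L : ℝ) (x y : Fin d → ℝ) : ℝ :=
  Real.sqrt (∑ i, (⨅ k : ℤ, |x i - y i - k * L|) ^ 2)

/-- The toroidal ball `B_r(x) = {y ∈ C_n : D(x,y) ≤ r}`. -/
def torBall {d : ℕ} (L : ℝ) (x : Fin d → ℝ) (r : ℝ) : Set (Fin d → ℝ) :=
  {y ∈ box d L | torDist L x y ≤ r}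

/-- Addition (translation) in the torus `[0, L)^d`. -/
def torAdd {d : ℕ} (L : ℝ) (y x : Fin d → ℝ) : Fin d → ℝ :=
  fun i => L * Int.fract ((y i + x i) / L)

/-- The uniform probability measure on the cube `[0, L)^d`. -/
def uniformBox (d : ℕ) (L : ℝ) : Measure (Fin d → ℝ) :=
  ((L.toNNReal ^ d)⁻¹ : ℝ≥0) • volume.restrict (box d L)

/-- The joint law of `n` independent points uniformly distributed on the cube `C_n`
of volume `n`; a point configuration is `ω : Fin n → (Fin d → ℝ)`, with `U_i = ω i`. -/
def binppLaw (d n : ℕ) : Measure (Fin n → Fin d → ℝ) :=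
  Measure.pi fun _ => uniformBox d (sideLen d n)

/-- The total covered volume `V` of the union of toroidal balls of radius `ρ`
centered at the `n` points. -/
def coveredVol (d n : ℕ) (ρ : ℝ) (ω : Fin n → Fin d → ℝ) : ℝ :=
  (volume (⋃ i, torBall (sideLen d n) (ω i) ρ)).toReal

/-- The number `S` of isolated points: indices `i` with `𝒰_n ∩ B_ρ(U_i) = {U_i}`. -/
def isolCount (d n : ℕ) (ρ : ℝ) (ω : Fin n → Fin d → ℝ) : ℝ :=
  ∑ i, if Set.range ω ∩ torBall (sideLen d n) (ω i) ρ = {ω i} then 1 else 0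

/-- `π_d`: the volume of the unit ball in `ℝ^d`. -/
def unitBallVol (d : ℕ) : ℝ :=
  (volume (Metric.closedBall (0 : EuclideanSpace ℝ (Fin d)) 1)).toReal

/-- `φ = π_d ρ^d`. -/
def phi (d : ℕ) (ρ : ℝ) : ℝ := unitBallVol d * ρ ^ d

/-- The standard normal cumulative distribution function. -/
def stdGaussCDF (t : ℝ) : ℝ := (gaussianReal 0 1 (Set.Iic t)).toReal

/-- The Kolmogorov distance `D_X` between the law of the standardized version of `X`
and the standard normal. -/
def kolDist {Ω : Type*} [MeasurableSpace Ω] (P : Measure Ω) (X : Ω → ℝ) : ℝ :=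
  ⨆ t : ℝ,
    |(P {ω | (X ω - ∫ x, X x ∂P) / Real.sqrt (variance X P) ≤ t}).toReal - stdGaussCDF t|

/-- A fixed unit vector in `ℝ^d` (junk value `0` if `d = 0`). -/
def unitVec (d : ℕ) : EuclideanSpace ℝ (Fin d) :=
  if h : 0 < d then EuclideanSpace.single (⟨0, h⟩ : Fin d) 1 else 0

/-- `ω_d(r)`: the volume of the union of two unit balls in `ℝ^d` whose centers are
at distance `r` apart. -/
def omegaVol (d : ℕ) (r : ℝ) : ℝ :=
  (volume (Metric.closedBall (0 : EuclideanSpace ℝ (Fin d)) 1 ∪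
      Metric.closedBall (r • unitVec d) 1)).toReal

/-- The integral `J_{r,d}(ρ) = d π_d ∫_0^r exp(-ρ^d ω_d(t)) t^{d-1} dt`. -/
def Jint (r : ℝ) (d : ℕ) (ρ : ℝ) : ℝ :=
  d * unitBallVol d * ∫ t in (0:ℝ)..r, Real.exp (-(ρ ^ d * omegaVol d t)) * t ^ (d - 1)

/-- The limiting variance density `g_V(ρ)`. -/
def gV (d : ℕ) (ρ : ℝ) : ℝ :=
  ρ ^ d * Jint 2 d ρ - (2 ^ d * phi d ρ + phi d ρ ^ 2) * Real.exp (-(2 * phi d ρ))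

/-- The limiting variance density `g_S(ρ)`. -/
def gS (d : ℕ) (ρ : ℝ) : ℝ :=
  Real.exp (-phi d ρ) - (1 + (2 ^ d - 2) * phi d ρ + phi d ρ ^ 2) * Real.exp (-(2 * phi d ρ))
    + ρ ^ d * (Jint 2 d ρ - Jint 1 d ρ)

/-- `κ_d`: the maximum number of closed unit balls in `ℝ^d` that can be packed so that
they all intersect a closed unit ball at the origin but are pairwise disjoint. -/
def kappa (d : ℕ) : ℕ :=
  sSup {k : ℕ | ∃ c : Fin k → EuclideanSpace ℝ (Fin d),
    (∀ i, (Metric.closedBall (c i) 1 ∩ Metric.closedBall 0 1).Nonempty) ∧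
    Pairwise fun i j => Disjoint (Metric.closedBall (c i) 1) (Metric.closedBall (c j) 1)}

/-- `η_V(n, ρ)`. -/
def etaV (d n : ℕ) (ρ : ℝ) : ℝ :=
  2 * phi d ρ ^ 2 * ((3 ^ d + 1) * phi d ρ + 1) ^ 2 *
      (1 + (2 ^ d + 1) * 6 ^ d * phi d ρ +
        ((2 * n - 6 ^ d * phi d ρ) / (n - 6 ^ d * phi d ρ)) * 6 ^ (2 * d) * phi d ρ ^ 2) +
    2 * phi d ρ ^ 4 *
      (3 * (4 ^ d + 2 ^ d) * phi d ρ +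
        3 * 4 ^ d * phi d ρ ^ 2 * ((2 * n - 3 * 2 ^ d * phi d ρ) / (n - 3 * 2 ^ d * phi d ρ)) +
        4 + 2 / n)

/-- `η_S(n, ρ)`. -/
def etaS (d n : ℕ) (ρ : ℝ) : ℝ :=
  2 * (1 + 2 * (kappa d : ℝ)) ^ 2 *
      (1 + (2 ^ d + 1) * 3 ^ d * phi d ρ +
        ((2 * n - 3 ^ d * phi d ρ) / (n - 3 ^ d * phi d ρ)) * 9 ^ d * phi d ρ ^ 2) +
    (((1 : ℝ) + kappa d) ^ 2 / 2) *
      ((2 ^ d + 2 * 3 ^ d + 3) * phi d ρ +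
        (2 ^ (d + 1) + 1) *
          ((2 * n - (2 ^ (d + 1) + 1) * phi d ρ) / (n - (2 ^ (d + 1) + 1) * phi d ρ)) *
          phi d ρ ^ 2 +
        (4 * n - 2) / (n - 1))

/-!
Choose an ordered pair of distinct indices `(i, j)` uniformly and, with a probability `q` depending
only on the number of neighbours of the point `i`, move the point `j` to a uniform point of the ball
around the point `i`. With `p = φ / n` the measure of a ball, the law of the moved configuration has
density with respect to the product law equal to the average over `(i, j)` of
`1 - q (deg i) + 1{i ~ j} (q (deg i) + (1 - p) / p * q (deg i - 1))`. Summing over `j` leaves a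
recursion for `q`, which is solved so that the sum becomes proportional to `1{deg i > 0}`; summing
over `i` then gives a multiple of the number `W` of nonisolated points, which is size biasing.

Moving one point changes `W` by at most `κ_d + 1`, because the points it isolates, or the points it
rescues from isolation, other than itself, are pairwise separated and all close to one point.

Conditioning on `W` is coarser than conditioning on the configuration, so the variance is at most
that of the drift `E[W' - W | U]`. The Efron–Stein inequality reduces this to the effect on the
drift of deleting a point, modelled by moving it to a place with no neighbours: deleting the point
`k` changes only the terms in which `i` lies within `3ρ` or `j` lies within `2ρ` of it, and the
second moments of the numbers of such indices give `η_S`.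
-/

/-- Bounded measurable real functions: over probability measures all of them are integrable and
their iterated integrals may be interchanged. -/
structure BddMeasurable {α : Type*} [MeasurableSpace α] (f : α → ℝ) : Prop where
  measurable : Measurable f
  exists_abs_le : ∃ C, ∀ x, |f x| ≤ C

namespace BddMeasurable

variable {α β ι : Type*} [MeasurableSpace α] [MeasurableSpace β] {f g : α → ℝ}

theorem const (c : ℝ) : BddMeasurable fun _ : α => c :=
  ⟨measurable_const, |c|, fun _ => le_rfl⟩

theorem comp {f : β → ℝ} (hf : BddMeasurable f) {φ : α → β} (hφ : Measurable φ) :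
    BddMeasurable fun x => f (φ x) :=
  let ⟨C, hC⟩ := hf.exists_abs_le
  ⟨hf.measurable.comp hφ, C, fun x => hC (φ x)⟩

theorem add (hf : BddMeasurable f) (hg : BddMeasurable g) : BddMeasurable fun x => f x + g x :=
  let ⟨C, hC⟩ := hf.exists_abs_le
  let ⟨D, hD⟩ := hg.exists_abs_le
  ⟨hf.measurable.add hg.measurable, C + D,
    fun x => (abs_add_le _ _).trans (add_le_add (hC x) (hD x))⟩

theorem mul (hf : BddMeasurable f) (hg : BddMeasurable g) : BddMeasurable fun x => f x * g x :=
  let ⟨C, hC⟩ := hf.exists_abs_le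
  let ⟨D, hD⟩ := hg.exists_abs_le
  ⟨hf.measurable.mul hg.measurable, C * D, fun x => by
    rw [abs_mul]
    exact mul_le_mul (hC x) (hD x) (abs_nonneg _) ((abs_nonneg _).trans (hC x))⟩

theorem const_mul (hf : BddMeasurable f) (c : ℝ) : BddMeasurable fun x => c * f x :=
  (const c).mul hf

theorem sub (hf : BddMeasurable f) (hg : BddMeasurable g) : BddMeasurable fun x => f x - g x := by
  simpa only [sub_eq_add_neg, neg_one_mul] using hf.add (hg.const_mul (-1))

theorem sq (hf : BddMeasurable f) : BddMeasurable fun x => f x ^ 2 := by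
  simpa only [pow_two] using hf.mul hf

theorem sum {s : Finset ι} {f : ι → α → ℝ} (hf : ∀ i ∈ s, BddMeasurable (f i)) :
    BddMeasurable fun x => ∑ i ∈ s, f i x := by
  induction s using Finset.induction_on with
  | empty => simpa only [Finset.sum_empty] using const 0
  | insert i s hi ih =>
    simp only [Finset.sum_insert hi]
    exact (hf i (Finset.mem_insert_self i s)).add
      (ih fun j hj => hf j (Finset.mem_insert_of_mem hj))

theorem ite {p : α → Prop} [DecidablePred p] (hp : MeasurableSet {x | p x}) (hf : BddMeasurable f)
    (hg : BddMeasurable g) : BddMeasurable fun x => if p x then f x else g x := by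
  obtain ⟨C, hC⟩ := hf.exists_abs_le
  obtain ⟨D, hD⟩ := hg.exists_abs_le
  refine ⟨hf.measurable.ite hp hg.measurable, max C D, fun x => ?_⟩
  split_ifs
  exacts [(hC x).trans (le_max_left _ _), (hD x).trans (le_max_right _ _)]

theorem indicator {s : Set α} (hs : MeasurableSet s) (hf : BddMeasurable f) :
    BddMeasurable (s.indicator f) :=
  .ite hs hf (.const 0)

theorem integrable (hf : BddMeasurable f) (μ : Measure α) [IsFiniteMeasure μ] :
    Integrable f μ :=
  let ⟨C, hC⟩ := hf.exists_abs_le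
  .of_bound hf.measurable.aestronglyMeasurable C (.of_forall hC)

theorem memLp (hf : BddMeasurable f) (p : ℝ≥0∞) (μ : Measure α) [IsFiniteMeasure μ] :
    MemLp f p μ :=
  let ⟨C, hC⟩ := hf.exists_abs_le
  .of_bound hf.measurable.aestronglyMeasurable C (.of_forall hC)

theorem integral_right {f : α × β → ℝ} (hf : BddMeasurable f) (ν : Measure β)
    [IsProbabilityMeasure ν] : BddMeasurable fun x => ∫ y, f (x, y) ∂ν := by
  obtain ⟨C, hC⟩ := hf.exists_abs_le
  refine ⟨hf.measurable.stronglyMeasurable.integral_prod_right'.measurable, C, fun x => ?_⟩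
  have h := norm_integral_le_of_norm_le_const (μ := ν) (f := fun y => f (x, y))
    (.of_forall fun y => hC (x, y))
  rwa [probReal_univ, mul_one] at h

theorem integral_left {f : α × β → ℝ} (hf : BddMeasurable f) (μ : Measure α)
    [IsProbabilityMeasure μ] : BddMeasurable fun y => ∫ x, f (x, y) ∂μ :=
  (hf.comp measurable_swap).integral_right μ

theorem variance_eq_sub (hf : BddMeasurable f) (μ : Measure α) [IsProbabilityMeasure μ] :
    Var[f; μ] = ∫ x, f x ^ 2 ∂μ - (∫ x, f x ∂μ) ^ 2 :=
  ProbabilityTheory.variance_eq_sub (hf.memLp 2 μ)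

theorem sq_integral_le (hf : BddMeasurable f) (μ : Measure α) [IsProbabilityMeasure μ] :
    (∫ x, f x ∂μ) ^ 2 ≤ ∫ x, f x ^ 2 ∂μ := by
  have := variance_nonneg f μ
  rw [hf.variance_eq_sub] at this
  linarith

theorem variance_le_integral_sub_sq (hf : BddMeasurable f) (μ : Measure α)
    [IsProbabilityMeasure μ] (a : ℝ) : Var[f; μ] ≤ ∫ x, (f x - a) ^ 2 ∂μ := by
  have hfa := (hf.sub (const a)).measurable.aestronglyMeasurable (μ := μ)
  rw [← variance_sub_const hf.measurable.aestronglyMeasurable a]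
  exact variance_le_expectation_sq hfa

section Product

variable {f : α × β → ℝ} (hf : BddMeasurable f)
  (μ : Measure α) [IsProbabilityMeasure μ] (ν : Measure β) [IsProbabilityMeasure ν]
include hf

theorem slice_left (y : β) : BddMeasurable fun x => f (x, y) :=
  hf.comp (by fun_prop)

theorem slice_right (x : α) : BddMeasurable fun y => f (x, y) :=
  hf.comp (by fun_prop)

theorem integral_comm : ∫ x, ∫ y, f (x, y) ∂ν ∂μ = ∫ y, ∫ x, f (x, y) ∂μ ∂ν :=
  integral_integral_swap (hf.integrable (μ.prod ν))

theorem variance_left : BddMeasurable fun y => Var[fun x => f (x, y); μ] := by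
  simp only [fun y => (hf.slice_left y).variance_eq_sub μ]
  exact (hf.sq.integral_left μ).sub (hf.integral_left μ).sq

theorem variance_prod_eq :
    Var[f; μ.prod ν] =
      ∫ y, Var[fun x => f (x, y); μ] ∂ν + Var[fun y => ∫ x, f (x, y) ∂μ; ν] := by
  have hmean := hf.integral_left μ
  rw [hf.variance_eq_sub, hmean.variance_eq_sub]
  simp only [fun y => (hf.slice_left y).variance_eq_sub μ]
  rw [integral_sub ((hf.sq.integral_left μ).integrable ν) (hmean.sq.integrable ν),
    integral_prod_symm _ (hf.integrable _), integral_prod_symm _ (hf.sq.integrable _)]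
  ring

theorem variance_integral_le :
    Var[fun y => ∫ x, f (x, y) ∂μ; ν] ≤ ∫ x, Var[fun y => f (x, y); ν] ∂μ := by
  have hmean := hf.integral_right ν
  have hcentered : BddMeasurable fun q : α × β => f q - ∫ y, f (q.1, y) ∂ν :=
    hf.sub (hmean.comp measurable_fst)
  calc Var[fun y => ∫ x, f (x, y) ∂μ; ν]
      ≤ ∫ y, (∫ x, f (x, y) ∂μ - ∫ x, ∫ y, f (x, y) ∂ν ∂μ) ^ 2 ∂ν :=
        (hf.integral_left μ).variance_le_integral_sub_sq ν _
    _ = ∫ y, (∫ x, (f (x, y) - ∫ y, f (x, y) ∂ν) ∂μ) ^ 2 ∂ν := by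
        simp only [fun y => integral_sub ((hf.slice_left y).integrable μ) (hmean.integrable μ)]
    _ ≤ ∫ y, ∫ x, (f (x, y) - ∫ y, f (x, y) ∂ν) ^ 2 ∂μ ∂ν :=
        integral_mono ((hcentered.integral_left μ).sq.integrable ν)
          ((hcentered.sq.integral_left μ).integrable ν)
          fun y => (hcentered.slice_left y).sq_integral_le μ
    _ = ∫ x, ∫ y, (f (x, y) - ∫ y, f (x, y) ∂ν) ^ 2 ∂ν ∂μ := (hcentered.sq.integral_comm μ ν).symm
    _ = ∫ x, Var[fun y => f (x, y); ν] ∂μ := by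
        simp only [fun x => variance_eq_integral (μ := ν)
          (hf.slice_right x).measurable.aemeasurable]

theorem variance_prod_le :
    Var[f; μ.prod ν] ≤
      ∫ y, Var[fun x => f (x, y); μ] ∂ν + ∫ x, Var[fun y => f (x, y); ν] ∂μ :=
  (hf.variance_prod_eq μ ν).trans_le (add_le_add_right (hf.variance_integral_le μ ν) _)

end Product

end BddMeasurable

section Resampling

theorem measurePreserving_update {ι : Type*} [Fintype ι] [DecidableEq ι] {E : ι → Type*}
    [∀ i, MeasurableSpace (E i)] (μ : ∀ i, Measure (E i)) [∀ i, IsProbabilityMeasure (μ i)]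
    (i : ι) :
    MeasurePreserving (fun q : (∀ i, E i) × E i => Function.update q.1 i q.2)
      ((Measure.pi μ).prod (μ i)) (Measure.pi μ) := by
  refine ⟨measurable_update', (Measure.pi_eq fun s hs => ?_).symm⟩
  have hpreimage : (fun q : (∀ i, E i) × E i => Function.update q.1 i q.2) ⁻¹' univ.pi s =
      univ.pi (Function.update s i univ) ×ˢ s i := by
    ext ⟨ω, x⟩
    simp only [mem_preimage, Set.mem_pi, mem_univ, forall_const, mem_prod]
    refine ⟨fun h => ⟨fun j => ?_, by simpa using h i⟩, fun h j => ?_⟩ <;>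
      obtain rfl | hj := eq_or_ne j i
    · simp
    · simpa [hj] using h j
    · simpa using h.2
    · simpa [hj] using h.1 j
  rw [Measure.map_apply measurable_update' (.univ_pi hs), hpreimage, Measure.prod_prod,
    Measure.pi_pi, ← Finset.prod_erase_mul _ _ (Finset.mem_univ i),
    ← Finset.prod_erase_mul _ (fun j => μ j (s j)) (Finset.mem_univ i), Function.update_self,
    measure_univ, mul_one]
  congr 1
  exact Finset.prod_congr rfl fun j hj => by rw [Function.update_of_ne (Finset.ne_of_mem_erase hj)]

variable {n : ℕ} {E : Type*} [MeasurableSpace E] (μ : Fin n → Measure E)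
  [∀ i, IsProbabilityMeasure (μ i)] {f g : (Fin n → E) → ℝ}

theorem BddMeasurable.update (hf : BddMeasurable f) (i : Fin n) :
    BddMeasurable fun q : (Fin n → E) × E => f (Function.update q.1 i q.2) :=
  hf.comp measurable_update'

theorem integral_update_eq (hf : BddMeasurable f) (i : Fin n) :
    ∫ ω, ∫ x, f (Function.update ω i x) ∂μ i ∂Measure.pi μ = ∫ ω, f ω ∂Measure.pi μ := by
  have h := measurePreserving_update μ i
  rw [← integral_prod _ ((hf.update i).integrable ((Measure.pi μ).prod (μ i))),
    ← integral_map h.measurable.aemeasurable hf.measurable.aestronglyMeasurable, h.map_eq]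

theorem integral_mul_integral_update (hf : BddMeasurable f) (hg : BddMeasurable g) (i : Fin n) :
    ∫ ω, f ω * ∫ x, g (Function.update ω i x) ∂μ i ∂Measure.pi μ =
      ∫ ω, (∫ x, f (Function.update ω i x) ∂μ i) *
        ∫ x, g (Function.update ω i x) ∂μ i ∂Measure.pi μ := by
  rw [← integral_update_eq μ (hf.mul ((hg.update i).integral_right (μ i))) i]
  simp only [Function.update_idem, integral_mul_const]

theorem integral_mul_integral_update_comm (hf : BddMeasurable f) (hg : BddMeasurable g)
    (i : Fin n) :
    ∫ ω, f ω * ∫ x, g (Function.update ω i x) ∂μ i ∂Measure.pi μ =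
      ∫ ω, g ω * ∫ x, f (Function.update ω i x) ∂μ i ∂Measure.pi μ := by
  simp only [integral_mul_integral_update μ hf hg, integral_mul_integral_update μ hg hf, mul_comm]

end Resampling

section EfronStein

variable {n : ℕ} {E : Type*} [MeasurableSpace E]

theorem measurePreserving_insertNth (μ : Fin (n + 1) → Measure E)
    [∀ i, IsProbabilityMeasure (μ i)] (p : Fin (n + 1)) :
    MeasurePreserving (fun q : E × (Fin n → E) => p.insertNth (α := fun _ => E) q.1 q.2)
      ((μ p).prod (Measure.pi fun j => μ (p.succAbove j))) (Measure.pi μ) :=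
  (measurePreserving_piFinSuccAbove μ p).symm

theorem integral_insertNth (μ : Fin (n + 1) → Measure E) [∀ i, IsProbabilityMeasure (μ i)]
    {f : (Fin (n + 1) → E) → ℝ} (hf : BddMeasurable f) (p : Fin (n + 1)) :
    ∫ q, f (p.insertNth q.1 q.2) ∂(μ p).prod (Measure.pi fun j => μ (p.succAbove j)) =
      ∫ ω, f ω ∂Measure.pi μ := by
  have h := measurePreserving_insertNth μ p
  rw [← h.map_eq, integral_map h.measurable.aemeasurable hf.measurable.aestronglyMeasurable]

variable (μ : Fin n → Measure E) [∀ i, IsProbabilityMeasure (μ i)] {f : (Fin n → E) → ℝ}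

theorem BddMeasurable.variance_update (hf : BddMeasurable f) (k : Fin n) :
    BddMeasurable fun ω => Var[fun x => f (Function.update ω k x); μ k] :=
  ((hf.update k).comp measurable_swap).variance_left (μ k)

theorem variance_pi_le (hf : BddMeasurable f) :
    Var[f; Measure.pi μ] ≤
      ∑ k, ∫ ω, Var[fun x => f (Function.update ω k x); μ k] ∂Measure.pi μ := by
  induction n with
  | zero =>
    have hconst : f = fun _ => f default := funext fun ω => congrArg f (Subsingleton.elim ω default)
    rw [hconst, (BddMeasurable.const _).variance_eq_sub]
    simp
  | succ n ih =>
    let succ := (0 : Fin (n + 1)).succAbove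
    set P := Measure.pi fun j => μ (succ j)
    let e : E × (Fin n → E) → Fin (n + 1) → E := fun q => (0 : Fin (n + 1)).insertNth q.1 q.2
    have he : MeasurePreserving e ((μ 0).prod P) (Measure.pi μ) := measurePreserving_insertNth μ 0
    have hfe : BddMeasurable fun q => f (e q) := hf.comp he.measurable
    have hvar (k) := (hf.variance_update μ k).comp he.measurable
    have hhead : ∫ y, Var[fun x => f (e (x, y)); μ 0] ∂P =
        ∫ ω, Var[fun x => f (Function.update ω 0 x); μ 0] ∂Measure.pi μ := by
      rw [← integral_insertNth μ (hf.variance_update μ 0) 0,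
        integral_prod_symm _ ((hvar 0).integrable _)]
      simp only [P, succ, e, Fin.update_insertNth, integral_const, probReal_univ, one_smul]
    have htail : ∫ x, Var[fun y => f (e (x, y)); P] ∂μ 0 ≤
        ∑ k, ∫ ω, Var[fun z => f (Function.update ω (succ k) z); μ (succ k)] ∂Measure.pi μ := by
      have hx (x : E) : Var[fun y => f (e (x, y)); P] ≤
          ∑ k, ∫ y, Var[fun z => f (Function.update (e (x, y)) (succ k) z); μ (succ k)] ∂P := by
        simpa only [e, Fin.insertNth_update] using ih (fun j => μ (succ j)) (hfe.slice_right x)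
      have hbdd (k) := (hvar k).integral_right P
      simp only [← integral_insertNth μ (hf.variance_update μ _) 0]
      rw [Finset.sum_congr rfl fun k _ => integral_prod _ ((hvar (succ k)).integrable _),
        ← integral_finsetSum _ fun k _ => (hbdd _).integrable _]
      exact integral_mono ((hfe.comp measurable_swap).variance_left P |>.integrable _)
        ((BddMeasurable.sum fun k _ => hbdd _).integrable _) hx
    rw [← he.variance_fun_comp hf.measurable.aemeasurable, Fin.sum_univ_succAbove _ 0]
    exact (hfe.variance_prod_le (μ 0) P).trans (add_le_add hhead.le htail)

theorem variance_pi_le_sum_sq_sub (hf : BddMeasurable f) (γ : E) :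
    Var[f; Measure.pi μ] ≤
      ∑ k, ∫ ω, (f ω - f (Function.update ω k γ)) ^ 2 ∂Measure.pi μ := by
  refine (variance_pi_le μ hf).trans (Finset.sum_le_sum fun k _ => ?_)
  have hfγ : BddMeasurable fun ω => (f ω - f (Function.update ω k γ)) ^ 2 :=
    (hf.sub (hf.comp measurable_update_left)).sq
  rw [← integral_update_eq μ hfγ k]
  refine integral_mono ((hf.variance_update μ k).integrable _)
    (((hfγ.update k).integral_right (μ k)).integrable _) fun ω => ?_
  simp only [Function.update_idem]
  exact ((hf.update k).slice_right ω).variance_le_integral_sub_sq (μ k) _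

end EfronStein

theorem measurePreserving_of_integral_comp_eq {α β : Type*} [MeasurableSpace α] [MeasurableSpace β]
    {μ : Measure α} {ν : Measure β} [IsFiniteMeasure μ] [IsFiniteMeasure ν] {T : α → β}
    (hT : Measurable T) (h : ∀ f : β → ℝ, BddMeasurable f → ∫ x, f (T x) ∂μ = ∫ y, f y ∂ν) :
    MeasurePreserving T μ ν := by
  refine ⟨hT, Measure.ext fun s hs => ?_⟩
  have hs1 := h (s.indicator 1) (.indicator hs (.const 1))
  have hcomp : (fun x => s.indicator (1 : β → ℝ) (T x)) = (T ⁻¹' s).indicator 1 := rfl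
  rwa [hcomp, integral_indicator_one (hT hs), integral_indicator_one hs, measureReal_def,
    measureReal_def, ENNReal.toReal_eq_toReal_iff' (measure_ne_top _ _) (measure_ne_top _ _),
    ← Measure.map_apply hT hs] at hs1

section ConditionalExpectation

variable {Ω α : Type*} [mΩ : MeasurableSpace Ω] [mα : MeasurableSpace α] {Q : Measure Ω}
  [IsProbabilityMeasure Q] {P : Measure α}

theorem variance_condExp_le {m : MeasurableSpace Ω} (hm : m ≤ mΩ) {X : Ω → ℝ} (hX : MemLp X 2 Q) :
    Var[Q[X|m]; Q] ≤ Var[X; Q] := by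
  rw [← integral_condVar_add_variance_condExp hm hX]
  exact le_add_of_nonneg_left
    (integral_nonneg_of_ae (condExp_nonneg (.of_forall fun _ => sq_nonneg _)))

theorem condExp_comap_ae_eq {T : Ω → α} (hT : MeasurePreserving T Q P) {D : Ω → ℝ} {F : α → ℝ}
    (hD : Integrable D Q) (hF : Integrable F P) (hF' : Measurable F)
    (h : ∀ s, MeasurableSet s → ∫ x in T ⁻¹' s, D x ∂Q = ∫ y in s, F y ∂P) :
    F ∘ T =ᵐ[Q] Q[D|mα.comap T] := by
  have hFT : Integrable (F ∘ T) Q := hT.integrable_comp_of_integrable hF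
  refine ae_eq_condExp_of_forall_setIntegral_eq hT.measurable.comap_le hD
    (fun _ _ _ => hFT.integrableOn) ?_
    (hF'.comp (comap_measurable T)).aestronglyMeasurable
  rintro _ ⟨s, hs, rfl⟩ -
  rw [h s hs, ← hT.map_eq, setIntegral_map hs hF'.aestronglyMeasurable hT.measurable.aemeasurable]
  rfl

theorem variance_condExp_comap_comp_le [IsProbabilityMeasure P]
    {T : Ω → α} (hT : MeasurePreserving T Q P) {D : Ω → ℝ} {F : α → ℝ} (hD : BddMeasurable D)
    (hF : BddMeasurable F)
    (h : ∀ s, MeasurableSet s → ∫ x in T ⁻¹' s, D x ∂Q = ∫ y in s, F y ∂P)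
    {W : α → ℝ} (hW : Measurable W) :
    Var[Q[D|Real.measurableSpace.comap fun x => W (T x)]; Q] ≤ Var[F; P] := by
  have hle : Real.measurableSpace.comap (fun x => W (T x)) ≤ mα.comap T :=
    (hW.comp (comap_measurable T)).comap_le
  have hF_eq := condExp_comap_ae_eq hT (hD.integrable Q) (hF.integrable P) hF.measurable h
  calc Var[Q[D|Real.measurableSpace.comap fun x => W (T x)]; Q]
      = Var[Q[F ∘ T|Real.measurableSpace.comap fun x => W (T x)]; Q] :=
        variance_congr <| (condExp_condExp_of_le hle hT.measurable.comap_le).symm.trans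
          (condExp_congr_ae hF_eq.symm)
    _ ≤ Var[F ∘ T; Q] :=
        variance_condExp_le (hW.comp hT.measurable).comap_le
          ((hF.comp hT.measurable).memLp 2 Q)
    _ = Var[F; P] := hT.variance_fun_comp hF.measurable.aemeasurable

end ConditionalExpectation

section Density

variable {α β : Type*} [MeasurableSpace α] [MeasurableSpace β] {ν : Measure α}
  {f : α → ℝ} {T : α → β}

theorem BddMeasurable.isFiniteMeasure_withDensity [IsFiniteMeasure ν] (hf : BddMeasurable f) :
    IsFiniteMeasure (ν.withDensity fun x => ENNReal.ofReal (f x)) :=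
  isFiniteMeasure_withDensity_ofReal (hf.integrable ν).hasFiniteIntegral

theorem integral_map_withDensity (hf : BddMeasurable f) (hf0 : ∀ x, 0 ≤ f x) (hT : Measurable T)
    {Φ : β → ℝ} (hΦ : BddMeasurable Φ) :
    ∫ y, Φ y ∂(ν.withDensity fun x => ENNReal.ofReal (f x)).map T = ∫ x, f x * Φ (T x) ∂ν := by
  rw [integral_map hT.aemeasurable hΦ.measurable.aestronglyMeasurable,
    integral_withDensity_eq_integral_toReal_smul hf.measurable.ennreal_ofReal
      (.of_forall fun _ => ENNReal.ofReal_lt_top)]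
  simp only [ENNReal.toReal_ofReal (hf0 _), smul_eq_mul]

end Density

/-- A graded proximity relation on a probability space `(E, μ)`: `near k x y` plays the role of
`D(x, y) ≤ k ρ` in a homogeneous metric space, and two points are neighbours when `near 1` holds.
The bound `vol k` on the measure of a `near k` neighbourhood is attained almost everywhere for
`k = 1`, and at most `kiss` pairwise non-neighbouring points have a common neighbour. The point
`ghost` is near nothing, so that moving a point there amounts to deleting it. -/
structure Proximity {E : Type*} [MeasurableSpace E] (μ : Measure E) where
  near : ℕ → E → E → Prop
  symm : ∀ {k x y}, near k x y → near k y x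
  trans : ∀ {a b x y z}, near a x y → near b y z → near (a + b) x z
  mono : ∀ {a b x y}, a ≤ b → near a x y → near b x y
  measurableSet_near : ∀ k, MeasurableSet {q : E × E | near k q.1 q.2}
  ghost : E
  not_near_ghost : ∀ {k x}, ¬ near k x ghost
  vol : ℕ → ℝ
  measureReal_le : ∀ k x, μ.real {z | near k x z} ≤ vol k
  measureReal_eq : ∀ᵐ x ∂μ, μ.real {z | near 1 x z} = vol 1
  vol_pos : 0 < vol 1
  vol_lt_one : vol 1 < 1
  kiss : ℕ
  le_kiss : ∀ {k} (c : Fin k → E) (z : E), (∀ i, near 1 z (c i)) →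
    Pairwise (fun i j => ¬ near 1 (c i) (c j)) → k ≤ kiss

namespace Proximity

variable {E : Type*} [MeasurableSpace E] {μ : Measure E} (G : Proximity μ) {n : ℕ}
  (ω : Fin n → E) {i j k : Fin n} {x z : E}

/-- The indices of the neighbours of the `i`-th point of a configuration. -/
def nbrs (i : Fin n) : Finset (Fin n) :=
  {j | j ≠ i ∧ G.near 1 (ω i) (ω j)}

/-- The indices of the nonisolated points of a configuration; their number is the variable `W`. -/
def nonisolated : Finset (Fin n) :=
  {i | (G.nbrs ω i).Nonempty}

/-- The indices that become nonisolated when the `j`-th point, previously deleted, is put at `z`.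
Their number is the add-one cost of `z`. -/
def gained (j : Fin n) (z : E) : Finset (Fin n) :=
  G.nonisolated (Function.update ω j z) \ G.nonisolated (Function.update ω j G.ghost)

variable {ω}

theorem near_comm {m : ℕ} : G.near m x z ↔ G.near m z x :=
  ⟨G.symm, G.symm⟩

theorem not_ghost_near {m : ℕ} : ¬ G.near m G.ghost x :=
  fun h => G.not_near_ghost (G.symm h)

theorem mem_nbrs : j ∈ G.nbrs ω i ↔ j ≠ i ∧ G.near 1 (ω i) (ω j) := by
  simp only [nbrs, Finset.mem_filter, Finset.mem_univ, true_and]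

theorem mem_nonisolated : i ∈ G.nonisolated ω ↔ (G.nbrs ω i).Nonempty := by
  simp only [nonisolated, Finset.mem_filter, Finset.mem_univ, true_and]

theorem card_nbrs_le : (G.nbrs ω i).card ≤ n - 1 := by
  have hsub : G.nbrs ω i ⊆ Finset.univ.erase i := fun j hj =>
    Finset.mem_erase.2 ⟨(G.mem_nbrs.1 hj).1, Finset.mem_univ j⟩
  simpa using Finset.card_le_card hsub

theorem nbrs_update (hij : i ≠ j) :
    G.nbrs (Function.update ω j x) i =
      if G.near 1 (ω i) x then insert j ((G.nbrs ω i).erase j) else (G.nbrs ω i).erase j := by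
  ext l
  rcases eq_or_ne l j with rfl | hl
  · split_ifs with h <;> simp [mem_nbrs, h, hij, hij.symm]
  · split_ifs <;> simp [mem_nbrs, hij, hl]

theorem nbrs_update_ghost (hij : i ≠ j) :
    G.nbrs (Function.update ω j G.ghost) i = (G.nbrs ω i).erase j := by
  rw [G.nbrs_update hij, if_neg G.not_near_ghost]

theorem nbrs_update_ghost_of_not_near (hij : i ≠ j) (h : ¬ G.near 1 (ω i) (ω j)) :
    G.nbrs (Function.update ω j G.ghost) i = G.nbrs ω i := by
  rw [G.nbrs_update_ghost hij, Finset.erase_eq_of_notMem fun hj => h (G.mem_nbrs.1 hj).2]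

theorem card_nbrs_update_of_near (hij : i ≠ j) (hx : G.near 1 (ω i) x)
    (h : G.near 1 (ω i) (ω j)) :
    (G.nbrs (Function.update ω j x) i).card = (G.nbrs ω i).card := by
  rw [G.nbrs_update hij, if_pos hx, Finset.insert_erase (G.mem_nbrs.2 ⟨hij.symm, h⟩)]

theorem card_nbrs_update_of_not_near (hij : i ≠ j) (hx : ¬ G.near 1 (ω i) x)
    (h : G.near 1 (ω i) (ω j)) :
    (G.nbrs (Function.update ω j x) i).card = (G.nbrs ω i).card - 1 := by
  rw [G.nbrs_update hij, if_neg hx, Finset.card_erase_of_mem (G.mem_nbrs.2 ⟨hij.symm, h⟩)]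

theorem nonisolated_update_ghost_subset :
    G.nonisolated (Function.update ω j G.ghost) ⊆ G.nonisolated (Function.update ω j z) := by
  intro l hl
  rw [mem_nonisolated] at hl ⊢
  refine hl.mono fun m hm => ?_
  rw [mem_nbrs] at hm ⊢
  rcases eq_or_ne l j with rfl | hlj
  · simp [not_ghost_near] at hm
  rcases eq_or_ne m j with rfl | hmj
  · simp [not_near_ghost] at hm
  · simpa only [Function.update_of_ne hlj, Function.update_of_ne hmj] using hm

theorem card_nonisolated_update :
    (G.nonisolated (Function.update ω j z)).card =
      (G.nonisolated (Function.update ω j G.ghost)).card + (G.gained ω j z).card := by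
  rw [gained, add_comm, Finset.card_sdiff_add_card_eq_card G.nonisolated_update_ghost_subset]

theorem gained_update_self : G.gained (Function.update ω j x) j z = G.gained ω j z := by
  simp only [gained, Function.update_idem]

theorem self_mem_gained : j ∈ G.gained ω j z ↔ ∃ l ≠ j, G.near 1 z (ω l) := by
  have hl (y : E) (l : Fin n) : (l ≠ j ∧ G.near 1 y (Function.update ω j y l)) ↔
      l ≠ j ∧ G.near 1 y (ω l) :=
    and_congr_right fun h => by rw [Function.update_of_ne h]
  simp only [gained, Finset.mem_sdiff, mem_nonisolated, Finset.Nonempty, mem_nbrs,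
    Function.update_self, hl, not_ghost_near, and_false, exists_false, not_false_eq_true, and_true]

theorem mem_gained_of_ne (hij : i ≠ j) :
    i ∈ G.gained ω j z ↔ G.near 1 (ω i) z ∧ (G.nbrs ω i).erase j = ∅ := by
  rw [gained, Finset.mem_sdiff, mem_nonisolated, mem_nonisolated, G.nbrs_update_ghost hij,
    G.nbrs_update hij, Finset.not_nonempty_iff_eq_empty]
  by_cases h : G.near 1 (ω i) z
  · simp [h]
  · simp [h, Finset.nonempty_iff_ne_empty]

theorem card_gained_erase_le : ((G.gained ω j z).erase j).card ≤ G.kiss := by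
  have hmem {l} (hl : l ∈ (G.gained ω j z).erase j) :=
    (G.mem_gained_of_ne (Finset.ne_of_mem_erase hl)).1 (Finset.mem_of_mem_erase hl)
  let e := ((G.gained ω j z).erase j).equivFin.symm
  refine G.le_kiss (fun a => ω (e a)) z (fun a => G.symm (hmem (e a).2).1) fun a b hab hnear => ?_
  have hne : (e b : Fin n) ≠ e a := fun h => hab (e.injective (Subtype.ext h)).symm
  have hb : (e b : Fin n) ∈ (G.nbrs ω (e a)).erase j :=
    Finset.mem_erase.2 ⟨Finset.ne_of_mem_erase (e b).2, G.mem_nbrs.2 ⟨hne, hnear⟩⟩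
  rw [(hmem (e a).2).2] at hb
  exact Finset.notMem_empty _ hb

theorem card_gained_le : (G.gained ω j z).card ≤ G.kiss + 1 := by
  have := Finset.pred_card_le_card_erase (s := G.gained ω j z) (a := j)
  have := G.card_gained_erase_le (ω := ω) (j := j) (z := z)
  omega

theorem gained_nonempty (hij : i ≠ j) (h : G.near 1 (ω i) z) : (G.gained ω j z).Nonempty :=
  ⟨j, G.self_mem_gained.2 ⟨i, hij, G.symm h⟩⟩

-- A point gained by `z` is a neighbour of `z`, so that its neighbours are `near 2` to `z`.
theorem gained_update_ghost_of_not_near (hkj : k ≠ j) (h : ¬ G.near 2 z (ω k)) :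
    G.gained (Function.update ω k G.ghost) j z = G.gained ω j z := by
  have hzk : ¬ G.near 1 z (ω k) := fun h1 => h (G.mono one_le_two h1)
  have hnear (l : Fin n) : G.near 1 z (Function.update ω k G.ghost l) ↔ G.near 1 z (ω l) := by
    rcases eq_or_ne l k with rfl | hl
    · simp [hzk, not_near_ghost]
    · rw [Function.update_of_ne hl]
  ext l
  rcases eq_or_ne l j with rfl | hlj
  · simp only [self_mem_gained, hnear]
  rw [G.mem_gained_of_ne hlj, G.mem_gained_of_ne hlj, G.near_comm, hnear, G.near_comm]
  refine and_congr_right fun hl => ?_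
  have hlk : l ≠ k := by rintro rfl; exact hzk (G.symm hl)
  rw [G.nbrs_update_ghost_of_not_near hlk fun h1 => h (G.trans (G.symm hl) h1)]

/-- The number `W` of nonisolated points. -/
def count (ω : Fin n → E) : ℝ := (G.nonisolated ω).card

theorem count_update_sub_count :
    G.count (Function.update ω j z) - G.count ω =
      (G.gained ω j z).card - (G.gained ω j (ω j)).card := by
  have hz := G.card_nonisolated_update (ω := ω) (j := j) (z := z)
  have hω := G.card_nonisolated_update (ω := ω) (j := j) (z := ω j)
  rw [Function.update_eq_self] at hω
  rw [count, count, hz, hω]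
  push_cast
  ring

theorem abs_count_update_sub_count_le :
    |G.count (Function.update ω j z) - G.count ω| ≤ G.kiss + 1 := by
  have hz : ((G.gained ω j z).card : ℝ) ≤ G.kiss + 1 := by exact_mod_cast G.card_gained_le
  have hω : ((G.gained ω j (ω j)).card : ℝ) ≤ G.kiss + 1 := by exact_mod_cast G.card_gained_le
  rw [count_update_sub_count, abs_le]
  constructor <;> linarith [(Nat.cast_nonneg (G.gained ω j z).card : (0 : ℝ) ≤ _),
    (Nat.cast_nonneg (G.gained ω j (ω j)).card : (0 : ℝ) ≤ _)]

end Proximity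

theorem sum_offDiag_add {ι R : Type*} [Fintype ι] [CommRing R] (a b : ι → R) :
    ∑ ij ∈ Finset.univ.offDiag, (a ij.1 + b ij.2) = (Fintype.card ι - 1) * ∑ i, (a i + b i) := by
  have hsplit := Finset.sum_union (f := fun ij : ι × ι => a ij.1 + b ij.2)
    (Finset.disjoint_diag_offDiag Finset.univ)
  rw [Finset.diag_union_offDiag, Finset.sum_diag, Finset.sum_product] at hsplit
  simp only [Finset.sum_add_distrib, Finset.sum_const, Finset.card_univ, nsmul_eq_mul,
    ← Finset.mul_sum] at hsplit ⊢
  linear_combination -hsplit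

namespace Proximity

section Measurability

variable {E : Type*} [MeasurableSpace E] {μ : Measure E} (G : Proximity μ) {n : ℕ}

theorem measurableSet_near_comp {α : Type*} [MeasurableSpace α] {f g : α → E} (m : ℕ)
    (hf : Measurable f) (hg : Measurable g) : MeasurableSet {a | G.near m (f a) (g a)} :=
  (hf.prodMk hg) (G.measurableSet_near m)

theorem bddMeasurable_ite_near {α : Type*} [MeasurableSpace α] {f g : α → E} (m : ℕ) (c : ℝ)
    (hf : Measurable f) (hg : Measurable g) :
    BddMeasurable fun a => if G.near m (f a) (g a) then c else 0 :=
  .ite (G.measurableSet_near_comp m hf hg) (.const c) (.const 0)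

theorem measurable_card_nbrs (i : Fin n) :
    Measurable fun ω : Fin n → E => (G.nbrs ω i).card := by
  simp only [nbrs, Finset.card_filter]
  exact Finset.measurable_sum _ fun j _ => .ite
    ((MeasurableSet.const _).inter
      (G.measurableSet_near_comp 1 (measurable_pi_apply i) (measurable_pi_apply j)))
    measurable_const measurable_const

theorem bddMeasurable_count : BddMeasurable fun ω : Fin n → E => G.count ω := by
  simp only [count, nonisolated, Finset.card_filter, ← Finset.card_pos, Nat.cast_sum, Nat.cast_ite,
    Nat.cast_one, Nat.cast_zero]
  exact .sum fun i _ => .ite (measurableSet_lt measurable_const (G.measurable_card_nbrs i))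
    (.const 1) (.const 0)

theorem bddMeasurable_card_gained (j : Fin n) :
    BddMeasurable fun p : (Fin n → E) × E => ((G.gained p.1 j p.2).card : ℝ) := by
  have hgained (p : (Fin n → E) × E) : ((G.gained p.1 j p.2).card : ℝ) =
      G.count (Function.update p.1 j p.2) - G.count (Function.update p.1 j G.ghost) := by
    rw [count, count, card_nonisolated_update, Nat.cast_add, add_sub_cancel_left]
  simp only [hgained]
  exact (G.bddMeasurable_count.update j).sub
    (G.bddMeasurable_count.comp (measurable_update_left.comp measurable_fst))

variable {q : ℕ → ℝ} (hq : ∀ k, q k ∈ Icc (0 : ℝ) 1)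
include hq

theorem bddMeasurable_comp_card_nbrs (i : Fin n) :
    BddMeasurable fun ω : Fin n → E => q (G.nbrs ω i).card :=
  .comp (f := q)
    ⟨measurable_of_countable q, 1, fun k => abs_le.2 ⟨by linarith [(hq k).1], (hq k).2⟩⟩
    (G.measurable_card_nbrs i)

end Measurability

section Drift

variable {E : Type*} [MeasurableSpace E] {μ : Measure E} (G : Proximity μ) {n : ℕ}

/-- The density with respect to `μ` of the uniform distribution on the neighbourhood of `x`. -/
def nbhdDensity (x z : E) : ℝ :=
  if G.near 1 x z then (G.vol 1)⁻¹ else 0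

theorem nbhdDensity_nonneg (x z : E) : 0 ≤ G.nbhdDensity x z := by
  rw [nbhdDensity]
  split_ifs
  exacts [(inv_pos.2 G.vol_pos).le, le_rfl]

theorem bddMeasurable_nbhdDensity : BddMeasurable fun p : E × E => G.nbhdDensity p.1 p.2 :=
  G.bddMeasurable_ite_near 1 _ measurable_fst measurable_snd

theorem bddMeasurable_nbhdDensity_apply (i : Fin n) :
    BddMeasurable fun p : (Fin n → E) × E => G.nbhdDensity (p.1 i) p.2 :=
  G.bddMeasurable_ite_near 1 _ ((measurable_pi_apply i).comp measurable_fst) measurable_snd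

theorem integral_nbhdDensity (x : E) :
    ∫ z, G.nbhdDensity x z ∂μ = (G.vol 1)⁻¹ * μ.real {z | G.near 1 x z} := by
  have hind : G.nbhdDensity x = {z | G.near 1 x z}.indicator fun _ => (G.vol 1)⁻¹ := by
    ext z
    simp only [nbhdDensity, indicator, mem_ofPred_eq]
  have hmeas : MeasurableSet {z | G.near 1 x z} :=
    G.measurableSet_near_comp 1 measurable_const measurable_id
  rw [hind, integral_indicator_const _ hmeas, smul_eq_mul, mul_comm]

theorem integral_nbhdDensity_le_one (x : E) : ∫ z, G.nbhdDensity x z ∂μ ≤ 1 := by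
  rw [integral_nbhdDensity, inv_mul_le_one₀ G.vol_pos]
  exact G.measureReal_le 1 x

theorem integral_nbhdDensity_nonneg (x : E) : 0 ≤ ∫ z, G.nbhdDensity x z ∂μ :=
  integral_nonneg (G.nbhdDensity_nonneg x)

theorem ae_integral_nbhdDensity : ∀ᵐ x ∂μ, ∫ z, G.nbhdDensity x z ∂μ = 1 := by
  filter_upwards [G.measureReal_eq] with x hx
  rw [integral_nbhdDensity, hx, inv_mul_cancel₀ G.vol_pos.ne']

theorem integral_nbhdDensity_mul_congr {f g : E → ℝ} {x : E}
    (h : ∀ z, G.near 1 x z → f z = g z) :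
    ∫ z, G.nbhdDensity x z * f z ∂μ = ∫ z, G.nbhdDensity x z * g z ∂μ := by
  congr 1 with z
  by_cases hz : G.near 1 x z
  · rw [h z hz]
  · simp only [nbhdDensity, if_neg hz, zero_mul]

variable {ω : Fin n → E} {i j k : Fin n}

/-- A bound for the effect of deleting the `k`-th point on a quantity attached to the `i`-th point:
it is `c` if the two points are `near m`, and `kiss + 1` if the `i`-th point itself is deleted. -/
def influence (m : ℕ) (c : ℝ) (ω : Fin n → E) (k i : Fin n) : ℝ :=
  if i = k then G.kiss + 1 else if G.near m (ω i) (ω k) then c else 0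

theorem influence_nonneg {m : ℕ} {c : ℝ} (hc : 0 ≤ c) : 0 ≤ G.influence m c ω k i := by
  rw [influence]
  split_ifs <;> positivity

theorem abs_card_gained_sub_le :
    |((G.gained (Function.update ω k G.ghost) j (Function.update ω k G.ghost j)).card : ℝ) -
        (G.gained ω j (ω j)).card| ≤ G.influence 2 (G.kiss + 1) ω k j := by
  have hle (ω : Fin n → E) : ((G.gained ω j (ω j)).card : ℝ) ∈ Icc 0 (G.kiss + 1 : ℝ) :=
    ⟨Nat.cast_nonneg _, by exact_mod_cast G.card_gained_le⟩
  have hω := hle ω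
  have hghost := hle (Function.update ω k G.ghost)
  rw [influence]
  split_ifs with hjk hnear
  · exact abs_le.2 ⟨by linarith [hω.2, hghost.1], by linarith [hω.1, hghost.2]⟩
  · exact abs_le.2 ⟨by linarith [hω.2, hghost.1], by linarith [hω.1, hghost.2]⟩
  · rw [Function.update_of_ne hjk, G.gained_update_ghost_of_not_near (Ne.symm hjk) hnear, sub_self,
      abs_zero]

/-- The sum of the influences of a point `y` through the first and the second index of a pair
when neither is the index of `y`, as a function of the other point `x`. -/
def totalInfluence (x y : E) : ℝ :=
  (if G.near 3 x y then 2 * (G.kiss : ℝ) + 1 else 0) +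
    if G.near 2 x y then (G.kiss : ℝ) + 1 else 0

theorem sum_influence_add_influence :
    ∑ i, (G.influence 3 (2 * G.kiss + 1) ω k i + G.influence 2 (G.kiss + 1) ω k i) =
      2 * (G.kiss + 1) + ∑ i ∈ Finset.univ.erase k, G.totalInfluence (ω i) (ω k) := by
  rw [← Finset.add_sum_erase _ _ (Finset.mem_univ k)]
  congr 1
  · rw [influence, influence, if_pos rfl, if_pos rfl, two_mul]
  · refine Finset.sum_congr rfl fun i hi => ?_
    rw [influence, influence, if_neg (Finset.ne_of_mem_erase hi),
      if_neg (Finset.ne_of_mem_erase hi), totalInfluence]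

variable [IsProbabilityMeasure μ]

theorem integral_nbhdDensity_mul_mem_Icc {f : E → ℝ} (hf : BddMeasurable f) {x : E} {a b : ℝ}
    (ha : a ≤ 0) (hb : 0 ≤ b) (h : ∀ z, G.near 1 x z → f z ∈ Icc a b) :
    ∫ z, G.nbhdDensity x z * f z ∂μ ∈ Icc a b := by
  have hx := G.bddMeasurable_nbhdDensity.slice_right x
  have hle (z : E) :
      G.nbhdDensity x z * f z ∈ Icc (G.nbhdDensity x z * a) (G.nbhdDensity x z * b) := by
    by_cases hz : G.near 1 x z
    · exact ⟨mul_le_mul_of_nonneg_left (h z hz).1 (G.nbhdDensity_nonneg x z),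
        mul_le_mul_of_nonneg_left (h z hz).2 (G.nbhdDensity_nonneg x z)⟩
    · simp [nbhdDensity, hz]
  have hlower := integral_mono ((hx.mul (.const a)).integrable μ) ((hx.mul hf).integrable μ)
    fun z => (hle z).1
  have hupper := integral_mono ((hx.mul hf).integrable μ) ((hx.mul (.const b)).integrable μ)
    fun z => (hle z).2
  simp only [integral_mul_const] at hlower hupper
  exact ⟨le_trans (by nlinarith [G.integral_nbhdDensity_le_one x]) hlower,
    hupper.trans (mul_le_of_le_one_left hb (G.integral_nbhdDensity_le_one x))⟩

/-- The mean change of `W` when the `j`-th point is moved, with probability `q` of the degree of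
the `i`-th point, to a uniformly chosen neighbour of the `i`-th point. -/
def jump (q : ℕ → ℝ) (i j : Fin n) (ω : Fin n → E) : ℝ :=
  q (G.nbrs ω i).card *
    ∫ z, G.nbhdDensity (ω i) z * (G.count (Function.update ω j z) - G.count ω) ∂μ

/-- The mean change of `W` when the pair `(i, j)` of `jump` is chosen uniformly at random. -/
def drift (q : ℕ → ℝ) (ω : Fin n → E) : ℝ :=
  ((n : ℝ) * (n - 1))⁻¹ * ∑ ij ∈ Finset.univ.offDiag, G.jump q ij.1 ij.2 ω

variable {q : ℕ → ℝ} (hq : ∀ k, q k ∈ Icc (0 : ℝ) 1)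

theorem jump_eq :
    G.jump q i j ω = q (G.nbrs ω i).card * (∫ z, G.nbhdDensity (ω i) z * (G.gained ω j z).card ∂μ -
      (∫ z, G.nbhdDensity (ω i) z ∂μ) * (G.gained ω j (ω j)).card) := by
  have hx := G.bddMeasurable_nbhdDensity.slice_right (ω i)
  simp only [jump, count_update_sub_count, mul_sub]
  rw [integral_sub ((hx.mul ((G.bddMeasurable_card_gained j).slice_right ω)).integrable μ)
    ((hx.mul (.const _)).integrable μ), integral_mul_const, mul_sub]

include hq

theorem jump_mem_Icc (hij : i ≠ j) : G.jump q i j ω ∈ Icc (-G.kiss : ℝ) (G.kiss + 1) := by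
  have : (0 : ℝ) ≤ G.kiss := Nat.cast_nonneg _
  have hbdd : BddMeasurable fun z => G.count (Function.update ω j z) - G.count ω :=
    ((G.bddMeasurable_count.update j).slice_right ω).sub (.const _)
  refine (convex_Icc _ _).smul_mem_of_zero_mem ⟨by linarith, by linarith⟩
    (G.integral_nbhdDensity_mul_mem_Icc hbdd (by linarith) (by linarith) fun z hz => ?_) (hq _)
  have hz1 : (1 : ℝ) ≤ (G.gained ω j z).card := by
    exact_mod_cast (G.gained_nonempty hij hz).card_pos
  have hω : ((G.gained ω j (ω j)).card : ℝ) ≤ G.kiss + 1 := by exact_mod_cast G.card_gained_le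
  refine ⟨?_, (abs_le.1 G.abs_count_update_sub_count_le).2⟩
  rw [count_update_sub_count]
  linarith

theorem bddMeasurable_jump (i j : Fin n) : BddMeasurable fun ω : Fin n → E => G.jump q i j ω := by
  refine (G.bddMeasurable_comp_card_nbrs hq i).mul (.integral_right (f := fun p : (Fin n → E) × E =>
    G.nbhdDensity (p.1 i) p.2 * (G.count (Function.update p.1 j p.2) - G.count p.1)) ?_ μ)
  exact (G.bddMeasurable_nbhdDensity_apply i).mul
    ((G.bddMeasurable_count.update j).sub (G.bddMeasurable_count.comp measurable_fst))

theorem bddMeasurable_drift : BddMeasurable fun ω : Fin n → E => G.drift q ω :=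
  (BddMeasurable.sum fun _ _ => G.bddMeasurable_jump hq _ _).const_mul _

omit hq

theorem jump_sub_jump_update_ghost (hik : i ≠ k) (h : ¬ G.near 3 (ω i) (ω k)) :
    G.jump q i j ω - G.jump q i j (Function.update ω k G.ghost) =
      q (G.nbrs ω i).card * ((∫ z, G.nbhdDensity (ω i) z ∂μ) *
        ((G.gained (Function.update ω k G.ghost) j (Function.update ω k G.ghost j)).card -
          (G.gained ω j (ω j)).card)) := by
  have hfar (z : E) (hz : G.near 1 (ω i) z) :
      ((G.gained (Function.update ω k G.ghost) j z).card : ℝ) = (G.gained ω j z).card := by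
    rcases eq_or_ne k j with rfl | hkj
    · rw [gained_update_self]
    · rw [G.gained_update_ghost_of_not_near hkj fun hzk => h (G.trans hz hzk)]
  have hdeg := G.nbrs_update_ghost_of_not_near hik fun h1 => h (G.mono (by norm_num) h1)
  rw [jump_eq, jump_eq, hdeg, Function.update_of_ne hik, G.integral_nbhdDensity_mul_congr hfar]
  ring

omit [IsProbabilityMeasure μ] in
theorem jump_update_ghost_self : G.jump q i j (Function.update ω i G.ghost) = 0 := by
  simp [jump, nbhdDensity, not_ghost_near]

include hq

theorem abs_jump_sub_jump_update_ghost_le (hij : i ≠ j) :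
    |G.jump q i j ω - G.jump q i j (Function.update ω k G.ghost)| ≤
      G.influence 3 (2 * G.kiss + 1) ω k i + G.influence 2 (G.kiss + 1) ω k j := by
  have : (0 : ℝ) ≤ G.kiss := Nat.cast_nonneg _
  have hcol : 0 ≤ G.influence 2 (G.kiss + 1) ω k j := G.influence_nonneg (by positivity)
  have hω := G.jump_mem_Icc (ω := ω) hq hij
  have hghost := G.jump_mem_Icc (ω := Function.update ω k G.ghost) hq hij
  rw [influence]
  split_ifs with hik hnear
  · subst hik
    rw [jump_update_ghost_self, sub_zero, abs_le]
    constructor <;> linarith [hω.1, hω.2]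
  · rw [abs_le]
    constructor <;> linarith [hω.1, hω.2, hghost.1, hghost.2]
  · rw [G.jump_sub_jump_update_ghost hik hnear, abs_mul, abs_mul, abs_of_nonneg (hq _).1,
      abs_of_nonneg (G.integral_nbhdDensity_nonneg _), zero_add, ← mul_assoc]
    exact (mul_le_of_le_one_left (abs_nonneg _) (mul_le_one₀ (hq _).2
      (G.integral_nbhdDensity_nonneg _) (G.integral_nbhdDensity_le_one _))).trans
      G.abs_card_gained_sub_le

theorem abs_drift_sub_drift_update_ghost_le (hn : 2 ≤ n) :
    |G.drift q ω - G.drift q (Function.update ω k G.ghost)| ≤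
      (n : ℝ)⁻¹ *
        (2 * (G.kiss + 1) + ∑ i ∈ Finset.univ.erase k, G.totalInfluence (ω i) (ω k)) := by
  have hn1 : (0 : ℝ) < n - 1 := by
    have : (2 : ℝ) ≤ n := by exact_mod_cast hn
    linarith
  have hpair := Finset.sum_le_sum fun ij (hij : ij ∈ (Finset.univ : Finset (Fin n)).offDiag) =>
    G.abs_jump_sub_jump_update_ghost_le (ω := ω) (k := k) hq (Finset.mem_offDiag.1 hij).2.2
  rw [sum_offDiag_add, Fintype.card_fin, sum_influence_add_influence] at hpair
  rw [drift, drift, ← mul_sub, ← Finset.sum_sub_distrib, abs_mul, abs_of_nonneg (by positivity),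
    mul_inv, mul_assoc]
  refine mul_le_mul_of_nonneg_left ?_ (by positivity)
  rw [inv_mul_le_iff₀ hn1]
  exact (Finset.abs_sum_le_sum_abs _ _).trans hpair

end Drift

end Proximity

section Moments

variable {E : Type*} [MeasurableSpace E] (μ : Measure E) [IsProbabilityMeasure μ] {n : ℕ}

theorem integral_kernel_mul_le {ψ : E × E → ℝ} (hψ : BddMeasurable ψ) {b : ℝ}
    (hb : ∀ y, ∫ x, ψ (x, y) ∂μ ≤ b) {i k : Fin n} (hik : i ≠ k) {g : (Fin n → E) → ℝ}
    (hg : BddMeasurable g) (hg0 : ∀ ω, 0 ≤ g ω)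
    (hgi : ∀ ω x, g (Function.update ω i x) = g ω) :
    ∫ ω, ψ (ω i, ω k) * g ω ∂Measure.pi (fun _ => μ) ≤
      b * ∫ ω, g ω ∂Measure.pi (fun _ => μ) := by
  have hψω : BddMeasurable fun ω : Fin n → E => ψ (ω i, ω k) := hψ.comp (by fun_prop)
  rw [← integral_update_eq (fun _ => μ) (hψω.mul hg) i, ← integral_const_mul]
  refine integral_mono ((((hψω.mul hg).update i).integral_right μ).integrable _)
    ((hg.const_mul b).integrable _) fun ω => ?_
  simp only [Function.update_self, Function.update_of_ne hik.symm, hgi, integral_mul_const]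
  exact mul_le_mul_of_nonneg_right (hb (ω k)) (hg0 ω)

theorem integral_kernel_le {ψ : E × E → ℝ} (hψ : BddMeasurable ψ) {b : ℝ}
    (hb : ∀ y, ∫ x, ψ (x, y) ∂μ ≤ b) {i k : Fin n} (hik : i ≠ k) :
    ∫ ω, ψ (ω i, ω k) ∂Measure.pi (fun _ => μ) ≤ b := by
  simpa using integral_kernel_mul_le μ hψ hb hik (.const 1) (fun _ => zero_le_one) fun _ _ => rfl

variable {ξ : E × E → ℝ} (hξ : BddMeasurable ξ) (hξ0 : ∀ p, 0 ≤ ξ p) {b c : ℝ}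
  (hb : ∀ y, ∫ x, ξ (x, y) ∂μ ≤ b) (hc : ∀ y, ∫ x, ξ (x, y) ^ 2 ∂μ ≤ c)
include hξ hξ0 hb hc

theorem integral_kernel_mul_kernel_le {i l k : Fin n} (hik : i ≠ k) (hlk : l ≠ k) :
    ∫ ω, ξ (ω i, ω k) * ξ (ω l, ω k) ∂Measure.pi (fun _ => μ) ≤
      b ^ 2 + if i = l then c else 0 := by
  split_ifs with hil
  · subst hil
    simp only [← pow_two]
    linarith [integral_kernel_le μ hξ.sq hc hik, sq_nonneg b]
  · have hb0 : 0 ≤ b := (integral_nonneg fun _ => hξ0 _).trans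
      (hb (Classical.choice μ.nonempty_of_neZero))
    have hl : BddMeasurable fun ω : Fin n → E => ξ (ω l, ω k) := hξ.comp (by fun_prop)
    have h1 := integral_kernel_mul_le μ hξ hb hik hl (fun _ => hξ0 _) fun ω x => by
      rw [Function.update_of_ne (Ne.symm hil), Function.update_of_ne hik.symm]
    linarith [mul_le_mul_of_nonneg_left (integral_kernel_le μ hξ hb hlk) hb0, pow_two b]

theorem integral_add_sum_kernel_sq_le {a : ℝ} (ha : 0 ≤ a) {s : Finset (Fin n)} {k : Fin n}
    (hk : k ∉ s) :
    ∫ ω, (a + ∑ i ∈ s, ξ (ω i, ω k)) ^ 2 ∂Measure.pi (fun _ => μ) ≤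
      a ^ 2 + 2 * a * (s.card * b) + (s.card * b) ^ 2 + s.card * c := by
  set P := Measure.pi fun _ : Fin n => μ
  have hne {i} (hi : i ∈ s) : i ≠ k := fun h => hk (h ▸ hi)
  have hξi (i : Fin n) : BddMeasurable fun ω : Fin n → E => ξ (ω i, ω k) := hξ.comp (by fun_prop)
  have hsum : BddMeasurable fun ω : Fin n → E => ∑ i ∈ s, ξ (ω i, ω k) := .sum fun i _ => hξi i
  have hfirst : ∫ ω, ∑ i ∈ s, ξ (ω i, ω k) ∂P ≤ s.card * b := by
    rw [integral_finsetSum _ fun i _ => (hξi i).integrable P, ← nsmul_eq_mul]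
    exact Finset.sum_le_card_nsmul _ _ _ fun i hi => integral_kernel_le μ hξ hb (hne hi)
  have hsecond : ∫ ω, (∑ i ∈ s, ξ (ω i, ω k)) ^ 2 ∂P ≤ (s.card * b) ^ 2 + s.card * c := by
    simp only [pow_two, Finset.sum_mul_sum]
    rw [integral_finsetSum _ fun i _ =>
      (BddMeasurable.sum fun l _ => (hξi i).mul (hξi l)).integrable P]
    simp only [fun i => integral_finsetSum s fun l _ => ((hξi i).mul (hξi l)).integrable P]
    refine (Finset.sum_le_sum fun i hi => Finset.sum_le_sum fun l hl =>
      integral_kernel_mul_kernel_le μ hξ hξ0 hb hc (hne hi) (hne hl)).trans_eq ?_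
    simp only [Finset.sum_add_distrib, Finset.sum_const, nsmul_eq_mul, Finset.sum_ite_eq]
    rw [Finset.sum_congr rfl fun i hi => if_pos hi, Finset.sum_const, nsmul_eq_mul]
    ring
  simp only [add_sq]
  rw [integral_add (((BddMeasurable.const _).add (hsum.const_mul _)).integrable P)
    (hsum.sq.integrable P), integral_add (integrable_const _) ((hsum.const_mul _).integrable P),
    integral_const, integral_const_mul, probReal_univ, one_smul]
  linarith [mul_le_mul_of_nonneg_left hfirst (mul_nonneg zero_le_two ha)]

end Moments

namespace Proximity

variable {E : Type*} [MeasurableSpace E] {μ : Measure E}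
  (G : Proximity μ) {n : ℕ}

theorem bddMeasurable_totalInfluence : BddMeasurable fun p : E × E => G.totalInfluence p.1 p.2 :=
  (G.bddMeasurable_ite_near 3 _ measurable_fst measurable_snd).add
    (G.bddMeasurable_ite_near 2 _ measurable_fst measurable_snd)

theorem totalInfluence_nonneg (x y : E) : 0 ≤ G.totalInfluence x y := by
  rw [totalInfluence]
  split_ifs <;> positivity

theorem integral_ite_near_le (m : ℕ) {c : ℝ} (hc : 0 ≤ c) (y : E) :
    ∫ x, (if G.near m x y then c else 0) ∂μ ≤ c * G.vol m := by
  have hind : (fun x => if G.near m x y then c else 0) =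
      {x | G.near m y x}.indicator fun _ => c := by
    ext x
    simp only [indicator, mem_ofPred_eq, G.near_comm (x := x)]
  have hmeas : MeasurableSet {x | G.near m y x} :=
    G.measurableSet_near_comp m measurable_const measurable_id
  rw [hind, integral_indicator_const _ hmeas, smul_eq_mul, mul_comm]
  exact mul_le_mul_of_nonneg_left (G.measureReal_le m y) hc

/-- A bound for the mean of `totalInfluence` in its first argument. -/
def influenceMean : ℝ :=
  (2 * G.kiss + 1) * G.vol 3 + (G.kiss + 1) * G.vol 2

/-- A bound for the second moment of `totalInfluence` in its first argument. -/
def influenceSecondMoment : ℝ :=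
  (2 * G.kiss + 1) ^ 2 * G.vol 3 +
    ((G.kiss + 1) ^ 2 + 2 * (2 * G.kiss + 1) * (G.kiss + 1)) * G.vol 2

variable [IsProbabilityMeasure μ]

theorem integral_ite_near_add_le (m l : ℕ) {a b : ℝ} (ha : 0 ≤ a) (hb : 0 ≤ b) (y : E) :
    ∫ x, ((if G.near m x y then a else 0) + if G.near l x y then b else 0) ∂μ ≤
      a * G.vol m + b * G.vol l := by
  rw [integral_add]
  · exact add_le_add (G.integral_ite_near_le m ha y) (G.integral_ite_near_le l hb y)
  · exact (G.bddMeasurable_ite_near m a measurable_id measurable_const).integrable μ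
  · exact (G.bddMeasurable_ite_near l b measurable_id measurable_const).integrable μ

theorem integral_totalInfluence_le (y : E) :
    ∫ x, G.totalInfluence x y ∂μ ≤ G.influenceMean :=
  G.integral_ite_near_add_le 3 2 (by positivity) (by positivity) y

theorem integral_totalInfluence_sq_le (y : E) :
    ∫ x, G.totalInfluence x y ^ 2 ∂μ ≤ G.influenceSecondMoment := by
  have hsq (x : E) : G.totalInfluence x y ^ 2 =
      (if G.near 3 x y then (2 * (G.kiss : ℝ) + 1) ^ 2 else 0) +
        if G.near 2 x y then
          ((G.kiss : ℝ) + 1) ^ 2 + 2 * (2 * (G.kiss : ℝ) + 1) * (G.kiss + 1) else 0 := by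
    rw [totalInfluence]
    by_cases h2 : G.near 2 x y
    · rw [if_pos h2, if_pos h2, if_pos (G.mono (by norm_num) h2), if_pos (G.mono (by norm_num) h2)]
      ring
    · rw [if_neg h2, if_neg h2, add_zero, add_zero, ite_pow, zero_pow two_ne_zero]
  simp only [hsq]
  exact G.integral_ite_near_add_le 3 2 (by positivity) (by positivity) y

/-- The numerator of the bound for the variance of the drift. -/
def driftBound (n : ℕ) : ℝ :=
  (2 * (G.kiss + 1)) ^ 2 + 2 * (2 * (G.kiss + 1)) * (n * G.influenceMean) +
    (n * G.influenceMean) ^ 2 + n * G.influenceSecondMoment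

variable {q : ℕ → ℝ} (hq : ∀ k, q k ∈ Icc (0 : ℝ) 1) (hn : 2 ≤ n)
include hq hn

theorem integral_drift_sub_sq_le (k : Fin n) :
    ∫ ω, (G.drift q ω - G.drift q (Function.update ω k G.ghost)) ^ 2 ∂Measure.pi (fun _ => μ) ≤
      (n : ℝ)⁻¹ ^ 2 * G.driftBound n := by
  set P := Measure.pi fun _ : Fin n => μ
  have hdrift := G.bddMeasurable_drift (n := n) hq
  have hmean : 0 ≤ G.influenceMean := (integral_nonneg fun x => G.totalInfluence_nonneg x _).trans
    (G.integral_totalInfluence_le G.ghost)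
  have hsecond : 0 ≤ G.influenceSecondMoment := (integral_nonneg fun x => sq_nonneg _).trans
    (G.integral_totalInfluence_sq_le G.ghost)
  have hcard : ((Finset.univ.erase k).card : ℝ) ≤ n := by
    exact_mod_cast (Finset.card_le_univ _).trans (Fintype.card_fin n).le
  have hmoment := integral_add_sum_kernel_sq_le μ G.bddMeasurable_totalInfluence
    (fun p => G.totalInfluence_nonneg p.1 p.2) G.integral_totalInfluence_le
    G.integral_totalInfluence_sq_le (a := 2 * (G.kiss + 1)) (by positivity)
    (Finset.notMem_erase k Finset.univ)
  have hsum : BddMeasurable fun ω : Fin n → E =>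
      2 * ((G.kiss : ℝ) + 1) + ∑ i ∈ Finset.univ.erase k, G.totalInfluence (ω i) (ω k) :=
    (BddMeasurable.const _).add (.sum fun i _ => G.bddMeasurable_totalInfluence.comp
      (φ := fun ω : Fin n → E => (ω i, ω k)) (by fun_prop))
  calc _ ≤ ∫ ω, (n : ℝ)⁻¹ ^ 2 * (2 * ((G.kiss : ℝ) + 1) +
          ∑ i ∈ Finset.univ.erase k, G.totalInfluence (ω i) (ω k)) ^ 2 ∂P := by
        refine integral_mono ((hdrift.sub (hdrift.comp measurable_update_left)).sq.integrable P)
          ((hsum.sq.const_mul _).integrable P) fun ω => ?_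
        have hω := abs_le.1 (G.abs_drift_sub_drift_update_ghost_le (ω := ω) (k := k) hq hn)
        simp only [← mul_pow]
        exact sq_le_sq' hω.1 hω.2
    _ ≤ (n : ℝ)⁻¹ ^ 2 * G.driftBound n := by
        rw [integral_const_mul, driftBound]
        exact mul_le_mul_of_nonneg_left (hmoment.trans (by gcongr)) (by positivity)

theorem variance_drift_le :
    Var[G.drift q; Measure.pi fun _ : Fin n => μ] ≤ G.driftBound n / n := by
  have hn0 : (n : ℝ) ≠ 0 := by positivity
  refine (variance_pi_le_sum_sq_sub _ (G.bddMeasurable_drift hq) G.ghost).trans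
    ((Finset.sum_le_sum fun k _ => G.integral_drift_sub_sq_le hq hn k).trans_eq ?_)
  rw [Finset.sum_const, Finset.card_univ, Fintype.card_fin, nsmul_eq_mul]
  field_simp

end Proximity

section MoveProbability

/-- The solution, up to normalization and read backwards from degree `m`, of the recursion
`moveProb_recursion` for the move probabilities; only the indices up to `m` are meaningful. -/
def moveWeight (m : ℕ) (r : ℝ) : ℕ → ℝ
  | 0 => 0
  | l + 1 => 1 + l / ((m - l + 1) * r) * moveWeight m r l

/-- The probability of accepting a move towards a point of degree `k` among `m` other points, when
`r` is the ratio of the measure of the complement of a neighbourhood to that of the neighbourhood.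
It is chosen so that the moves size-bias the number of points of positive degree. -/
def moveProb (m : ℕ) (r : ℝ) (k : ℕ) : ℝ :=
  moveWeight m r (m - k) / ((k + 1) * moveWeight m r m)

variable {m : ℕ} {r : ℝ} (hr : 0 < r)
include hr

theorem moveWeight_nonneg {l : ℕ} (hl : l ≤ m) : 0 ≤ moveWeight m r l := by
  induction l with
  | zero => exact le_rfl
  | succ l ih =>
    have hlm : (l : ℝ) + 1 ≤ m := by exact_mod_cast hl
    exact add_nonneg zero_le_one (mul_nonneg (div_nonneg l.cast_nonneg
      (mul_nonneg (by linarith) hr.le)) (ih (by omega)))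

theorem moveWeight_le_succ {l : ℕ} (hl : l + 1 ≤ m) :
    moveWeight m r l ≤ moveWeight m r (l + 1) := by
  induction l with
  | zero => exact moveWeight_nonneg hr hl
  | succ l ih =>
    have hlm : (l : ℝ) + 2 ≤ m := by exact_mod_cast hl
    have hcoeff :
        (l : ℝ) / ((m - l + 1) * r) ≤ ((l + 1 : ℕ) : ℝ) / ((m - (l + 1 : ℕ) + 1) * r) := by
      push_cast
      exact div_le_div₀ (by positivity) (by linarith) (mul_pos (by linarith) hr)
        (mul_le_mul_of_nonneg_right (by linarith) hr.le)
    exact add_le_add_right (mul_le_mul hcoeff (ih (by omega)) (moveWeight_nonneg hr (by omega))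
      (div_nonneg (by positivity) (mul_nonneg (by push_cast; linarith) hr.le))) 1

theorem moveWeight_mono {l l' : ℕ} (h : l ≤ l') (hl' : l' ≤ m) :
    moveWeight m r l ≤ moveWeight m r l' := by
  induction h with
  | refl => exact le_rfl
  | step _ ih => exact (ih (by omega)).trans (moveWeight_le_succ hr hl')

theorem moveWeight_pos (hm : 1 ≤ m) : 0 < moveWeight m r m :=
  calc 0 < moveWeight m r 1 := by simp [moveWeight]
    _ ≤ moveWeight m r m := moveWeight_mono hr hm le_rfl

theorem moveProb_mem_Icc (hm : 1 ≤ m) (k : ℕ) : moveProb m r k ∈ Icc (0 : ℝ) 1 := by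
  have hpos := moveWeight_pos hr hm
  refine ⟨div_nonneg (moveWeight_nonneg hr (Nat.sub_le m k)) (by positivity), ?_⟩
  rw [moveProb, div_le_one (by positivity)]
  exact (moveWeight_mono hr (Nat.sub_le m k) le_rfl).trans
    (le_mul_of_one_le_left hpos.le (by linarith [k.cast_nonneg (α := ℝ)]))

theorem moveProb_recursion (hm : 1 ≤ m) {k : ℕ} (hk : k ≤ m) :
    1 - moveProb m r k + k / m * (moveProb m r k + r * moveProb m r (k - 1)) =
      (1 + r / (m * moveWeight m r m)) * if 0 < k then 1 else 0 := by
  have hpos := moveWeight_pos hr hm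
  have : (0 : ℝ) < m := by exact_mod_cast hm
  rcases k with _ | k
  · simp [moveProb, hpos.ne']
  have hsucc : m - k = (m - (k + 1)) + 1 := by omega
  have hcast : ((m - (k + 1) : ℕ) : ℝ) = m - (k + 1) := by push_cast [Nat.cast_sub hk]; ring
  have hdenom : (m : ℝ) - (m - (k + 1)) + 1 = k + 2 := by ring
  rw [if_pos k.succ_pos, Nat.add_sub_cancel, moveProb, moveProb, hsucc, moveWeight, hcast, hdenom]
  push_cast
  field_simp
  ring

end MoveProbability

theorem measurable_prodMk_update {E : Type*} [MeasurableSpace E] {n : ℕ} {j : Fin n} :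
    Measurable fun p : (Fin n → E) × E => (p.1, Function.update p.1 j p.2) :=
  measurable_fst.prodMk measurable_update'

namespace Proximity

section Coupling

variable {E : Type*} [MeasurableSpace E] {μ : Measure E} (G : Proximity μ) {n : ℕ}

/-- The density of the move `ω ↦ Function.update ω j z` of a `pairCoupling`. -/
def moveDensity (q : ℕ → ℝ) (i : Fin n) (p : (Fin n → E) × E) : ℝ :=
  q (G.nbrs p.1 i).card * G.nbhdDensity (p.1 i) p.2

/-- The joint law of a configuration of `n` independent points with law `μ` and its modification
by moving the `j`-th point, with probability `q` of the degree of the `i`-th point, to a uniformly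
chosen neighbour of the `i`-th point. -/
def pairCoupling (q : ℕ → ℝ) (i j : Fin n) : Measure ((Fin n → E) × (Fin n → E)) :=
  ((Measure.pi fun _ => μ).withDensity fun ω =>
      ENNReal.ofReal (1 - q (G.nbrs ω i).card)).map (fun ω => (ω, ω)) +
    (((Measure.pi fun _ => μ).prod μ).withDensity fun p =>
      ENNReal.ofReal (G.moveDensity q i p)).map fun p => (p.1, Function.update p.1 j p.2)

/-- The `pairCoupling` for a uniformly chosen ordered pair of distinct indices. -/
def coupling (n : ℕ) (q : ℕ → ℝ) : Measure ((Fin n → E) × (Fin n → E)) :=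
  ((n : ℝ≥0) * (n - 1 : ℕ))⁻¹ • ∑ ij ∈ Finset.univ.offDiag, G.pairCoupling q ij.1 ij.2

/-- The conditional expectation of `Φ` under `pairCoupling` given the first configuration `ω`. -/
def pairMean (q : ℕ → ℝ) (i j : Fin n) (Φ : (Fin n → E) × (Fin n → E) → ℝ) (ω : Fin n → E) : ℝ :=
  (1 - q (G.nbrs ω i).card) * Φ (ω, ω) +
    q (G.nbrs ω i).card * ∫ z, G.nbhdDensity (ω i) z * Φ (ω, Function.update ω j z) ∂μ

variable {q : ℕ → ℝ} (hq : ∀ k, q k ∈ Icc (0 : ℝ) 1) {i j : Fin n}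

theorem ae_coupling {p : (Fin n → E) × (Fin n → E) → Prop} (hp : MeasurableSet {a | p a})
    (hstay : ∀ ω, p (ω, ω)) (hmove : ∀ ω j z, p (ω, Function.update ω j z)) :
    ∀ᵐ a ∂G.coupling n q, p a := by
  refine Measure.ae_smul_measure ?_ _
  rw [ae_finsetSum_measure_iff]
  refine fun ij _ => ae_add_measure_iff.2 ⟨?_, ?_⟩
  · exact (ae_map_iff (measurable_id.prodMk measurable_id).aemeasurable hp).2 (.of_forall hstay)
  · exact (ae_map_iff measurable_prodMk_update.aemeasurable hp).2 (.of_forall fun _ => hmove _ _ _)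

include hq

theorem moveDensity_nonneg (p : (Fin n → E) × E) : 0 ≤ G.moveDensity q i p :=
  mul_nonneg (hq _).1 (G.nbhdDensity_nonneg _ _)

theorem bddMeasurable_moveDensity (i : Fin n) :
    BddMeasurable fun p : (Fin n → E) × E => G.moveDensity q i p :=
  ((G.bddMeasurable_comp_card_nbrs hq i).comp measurable_fst).mul
    (G.bddMeasurable_nbhdDensity_apply i)

theorem bddMeasurable_one_sub_comp_card_nbrs (i : Fin n) :
    BddMeasurable fun ω : Fin n → E => 1 - q (G.nbrs ω i).card :=
  (BddMeasurable.const 1).sub (G.bddMeasurable_comp_card_nbrs hq i)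

variable [IsProbabilityMeasure μ]

theorem isFiniteMeasure_pairCoupling (i j : Fin n) : IsFiniteMeasure (G.pairCoupling q i j) := by
  have hstay := (G.bddMeasurable_one_sub_comp_card_nbrs hq i).isFiniteMeasure_withDensity
    (ν := Measure.pi fun _ => μ)
  have hmove := (G.bddMeasurable_moveDensity hq i).isFiniteMeasure_withDensity
    (ν := (Measure.pi fun _ => μ).prod μ)
  unfold pairCoupling
  infer_instance

theorem isFiniteMeasure_coupling : IsFiniteMeasure (G.coupling n q) := by
  have := fun i j : Fin n => G.isFiniteMeasure_pairCoupling hq i j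
  unfold coupling
  infer_instance

section Integral

variable {Φ : (Fin n → E) × (Fin n → E) → ℝ} (hΦ : BddMeasurable Φ)
include hΦ

theorem integral_pairCoupling (i j : Fin n) :
    ∫ a, Φ a ∂G.pairCoupling q i j = ∫ ω, G.pairMean q i j Φ ω ∂Measure.pi fun _ => μ := by
  have hdiag : Measurable fun ω : Fin n → E => (ω, ω) := measurable_id.prodMk measurable_id
  have hstay := G.bddMeasurable_one_sub_comp_card_nbrs (n := n) hq i
  have hmove := G.bddMeasurable_moveDensity hq i
  have hmoveΦ := hmove.mul (hΦ.comp (measurable_prodMk_update (j := j)))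
  have := hstay.isFiniteMeasure_withDensity (ν := Measure.pi fun _ => μ)
  have := hmove.isFiniteMeasure_withDensity (ν := (Measure.pi fun _ => μ).prod μ)
  rw [pairCoupling, integral_add_measure (hΦ.integrable _) (hΦ.integrable _),
    integral_map_withDensity hstay (fun _ => sub_nonneg.2 (hq _).2) hdiag hΦ,
    integral_map_withDensity hmove (G.moveDensity_nonneg hq) measurable_prodMk_update hΦ,
    integral_prod _ (hmoveΦ.integrable _), ← integral_add
      ((hstay.mul (hΦ.comp hdiag)).integrable _) ((hmoveΦ.integral_right μ).integrable _)]
  simp only [pairMean, moveDensity, mul_assoc, integral_const_mul]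

theorem integral_coupling :
    ∫ a, Φ a ∂G.coupling n q = ((n : ℝ) * (n - 1))⁻¹ *
      ∑ ij ∈ Finset.univ.offDiag, ∫ ω, G.pairMean q ij.1 ij.2 Φ ω ∂Measure.pi fun _ => μ := by
  have := fun i j : Fin n => G.isFiniteMeasure_pairCoupling hq i j
  have hcast : (n : ℝ) * (n - 1 : ℕ) = n * (n - 1) := by cases n <;> simp
  rw [coupling, integral_smul_nnreal_measure, integral_finsetSum_measure fun _ _ => hΦ.integrable _,
    NNReal.smul_def, smul_eq_mul]
  simp only [G.integral_pairCoupling hq hΦ, NNReal.coe_inv, NNReal.coe_mul, NNReal.coe_natCast,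
    hcast]

end Integral

omit hq in
theorem ae_integral_nbhdDensity_apply (i : Fin n) :
    ∀ᵐ ω ∂Measure.pi fun _ : Fin n => μ, ∫ z, G.nbhdDensity (ω i) z ∂μ = 1 :=
  (measurePreserving_eval (fun _ => μ) i).quasiMeasurePreserving.ae G.ae_integral_nbhdDensity

omit hq in
theorem pairMean_fst_ae_eq (h : (Fin n → E) → ℝ) :
    G.pairMean q i j (fun a => h a.1) =ᵐ[Measure.pi fun _ => μ] h := by
  filter_upwards [G.ae_integral_nbhdDensity_apply i] with ω hω
  simp only [pairMean]
  rw [integral_mul_const, hω]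
  ring

theorem integral_fst_coupling (hn : 2 ≤ n) {h : (Fin n → E) → ℝ} (hh : BddMeasurable h) :
    ∫ a, h a.1 ∂G.coupling n q = ∫ ω, h ω ∂Measure.pi fun _ => μ := by
  have hn2 : (2 : ℝ) ≤ n := by exact_mod_cast hn
  have hn0 : (n : ℝ) * (n - 1) ≠ 0 := mul_ne_zero (by linarith) (by linarith)
  rw [G.integral_coupling hq (hh.comp measurable_fst)]
  simp only [integral_congr_ae (G.pairMean_fst_ae_eq h), Finset.sum_const, Finset.offDiag_card,
    Finset.card_univ, Fintype.card_fin, nsmul_eq_mul, ← Nat.mul_sub_one,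
    Nat.cast_mul, Nat.cast_pred (by omega : 0 < n)]
  exact inv_mul_cancel_left₀ hn0 _

theorem measurePreserving_fst_coupling (hn : 2 ≤ n) :
    MeasurePreserving Prod.fst (G.coupling n q) (Measure.pi fun _ => μ) :=
  have := G.isFiniteMeasure_coupling (n := n) hq
  measurePreserving_of_integral_comp_eq measurable_fst fun _ => G.integral_fst_coupling hq hn

theorem isProbabilityMeasure_coupling (hn : 2 ≤ n) : IsProbabilityMeasure (G.coupling n q) := by
  have : IsProbabilityMeasure ((G.coupling n q).map Prod.fst) := by
    rw [(G.measurePreserving_fst_coupling hq hn).map_eq]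
    infer_instance
  exact Measure.isProbabilityMeasure_of_map Prod.fst

omit [IsProbabilityMeasure μ] hq in
theorem pairMean_indicator_count_sub (s : Set (Fin n → E)) :
    G.pairMean q i j ((Prod.fst ⁻¹' s).indicator fun a => G.count a.2 - G.count a.1) =
      s.indicator (G.jump q i j) := by
  ext ω
  by_cases hω : ω ∈ s <;> simp [pairMean, jump, hω]

theorem setIntegral_coupling {s : Set (Fin n → E)} (hs : MeasurableSet s) :
    ∫ a in Prod.fst ⁻¹' s, (G.count a.2 - G.count a.1) ∂G.coupling n q =
      ∫ ω in s, G.drift q ω ∂Measure.pi fun _ => μ := by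
  have hcount := G.bddMeasurable_count (n := n)
  rw [← integral_indicator (measurable_fst hs), G.integral_coupling hq
    (.indicator (measurable_fst hs)
      ((hcount.comp measurable_snd).sub (hcount.comp measurable_fst)))]
  simp only [pairMean_indicator_count_sub, integral_indicator hs, drift, integral_const_mul]
  rw [integral_finsetSum _ fun ij _ => (G.bddMeasurable_jump hq ij.1 ij.2).integrable _]

end Coupling

section SizeBias

variable {E : Type*} [MeasurableSpace E] {μ : Measure E} (G : Proximity μ) {n : ℕ} {i j : Fin n}
  {ω : Fin n → E} {q : ℕ → ℝ}

/-- The density of the image of `moveDensity` under the move `ω ↦ Function.update ω j z`. -/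
def moveImageDensity (q : ℕ → ℝ) (i j : Fin n) (ω : Fin n → E) : ℝ :=
  if G.near 1 (ω i) (ω j) then
    q (G.nbrs ω i).card + (1 - G.vol 1) / G.vol 1 * q ((G.nbrs ω i).card - 1) else 0

theorem sum_moveImageDensity (i : Fin n) :
    ∑ j ∈ Finset.univ.erase i, (1 - q (G.nbrs ω i).card + G.moveImageDensity q i j ω) =
      (n - 1 : ℕ) * (1 - q (G.nbrs ω i).card) + (G.nbrs ω i).card *
        (q (G.nbrs ω i).card + (1 - G.vol 1) / G.vol 1 * q ((G.nbrs ω i).card - 1)) := by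
  have hnbrs : (Finset.univ.erase i).filter (fun j => G.near 1 (ω i) (ω j)) = G.nbrs ω i := by
    ext j
    simp only [Finset.mem_filter, Finset.mem_erase, Finset.mem_univ, and_true, mem_nbrs]
  rw [Finset.sum_add_distrib]
  simp only [moveImageDensity, ← Finset.sum_filter, hnbrs, Finset.sum_const, nsmul_eq_mul,
    Finset.card_erase_of_mem (Finset.mem_univ i), Finset.card_univ, Fintype.card_fin]

theorem sum_offDiag_moveImageDensity (hn : 2 ≤ n) {c : ℝ}
    (hc : ∀ k ≤ n - 1, 1 - q k + k / (n - 1 : ℕ) *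
      (q k + (1 - G.vol 1) / G.vol 1 * q (k - 1)) = c * if 0 < k then 1 else 0) :
    ∑ ij ∈ Finset.univ.offDiag, (1 - q (G.nbrs ω ij.1).card + G.moveImageDensity q ij.1 ij.2 ω) =
      (n - 1 : ℕ) * c * G.count ω := by
  have hn0 : ((n - 1 : ℕ) : ℝ) ≠ 0 := by exact_mod_cast (by omega : n - 1 ≠ 0)
  have hrow (i : Fin n) :
      ∑ j ∈ Finset.univ.erase i, (1 - q (G.nbrs ω i).card + G.moveImageDensity q i j ω) =
        (n - 1 : ℕ) * c * if (G.nbrs ω i).Nonempty then 1 else 0 := by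
    simp only [← Finset.card_pos]
    rw [sum_moveImageDensity, mul_assoc, ← hc _ G.card_nbrs_le]
    field_simp
  rw [count, nonisolated, Finset.card_filter, Nat.cast_sum, Finset.mul_sum]
  simp only [Nat.cast_ite, Nat.cast_one, Nat.cast_zero, ← hrow]
  exact Finset.sum_finset_product _ _ _ (by simp [eq_comm])

variable [IsProbabilityMeasure μ]

theorem integral_comp_card_nbrs_update (hij : i ≠ j) (h : G.near 1 (ω i) (ω j))
    (hω : μ.real {z | G.near 1 (ω i) z} = G.vol 1) :
    ∫ x, q (G.nbrs (Function.update ω j x) i).card ∂μ =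
      G.vol 1 * q (G.nbrs ω i).card + (1 - G.vol 1) * q ((G.nbrs ω i).card - 1) := by
  have hmeas : MeasurableSet {z | G.near 1 (ω i) z} :=
    G.measurableSet_near_comp 1 measurable_const measurable_id
  have hcases (x : E) : q (G.nbrs (Function.update ω j x) i).card =
      {z | G.near 1 (ω i) z}.indicator
        (fun _ => q (G.nbrs ω i).card - q ((G.nbrs ω i).card - 1)) x +
        q ((G.nbrs ω i).card - 1) := by
    by_cases hx : G.near 1 (ω i) x
    · simp [G.card_nbrs_update_of_near hij hx h, hx]
    · simp [G.card_nbrs_update_of_not_near hij hx h, hx]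
  simp only [hcases]
  rw [integral_add ((BddMeasurable.const _).indicator hmeas |>.integrable μ) (integrable_const _),
    integral_indicator_const _ hmeas, hω, integral_const, probReal_univ]
  simp only [smul_eq_mul]
  ring

variable (hq : ∀ k, q k ∈ Icc (0 : ℝ) 1) {h : (Fin n → E) → ℝ} (hh : BddMeasurable h)
include hq

omit [IsProbabilityMeasure μ] in
theorem bddMeasurable_moveImageDensity (i j : Fin n) :
    BddMeasurable (G.moveImageDensity q i j) :=
  .ite (G.measurableSet_near_comp 1 (measurable_pi_apply i) (measurable_pi_apply j))
    ((G.bddMeasurable_comp_card_nbrs hq i).add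
      ((G.bddMeasurable_comp_card_nbrs (q := fun k => q (k - 1)) (fun _ => hq _) i).const_mul _))
    (.const 0)

include hh

theorem integral_move_eq (hij : i ≠ j) :
    ∫ ω, q (G.nbrs ω i).card *
        (∫ z, G.nbhdDensity (ω i) z * h (Function.update ω j z) ∂μ) ∂Measure.pi (fun _ => μ) =
      ∫ ω, h ω * G.moveImageDensity q i j ω ∂Measure.pi fun _ => μ := by
  have hdens : BddMeasurable fun ω : Fin n → E => G.nbhdDensity (ω i) (ω j) :=
    G.bddMeasurable_ite_near 1 _ (measurable_pi_apply i) (measurable_pi_apply j)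
  have hswap := integral_mul_integral_update_comm (fun _ => μ)
    (G.bddMeasurable_comp_card_nbrs hq i) (hdens.mul hh) j
  simp only [Function.update_of_ne hij, Function.update_self] at hswap
  rw [hswap]
  refine integral_congr_ae ?_
  filter_upwards
    [(measurePreserving_eval (fun _ => μ) i).quasiMeasurePreserving.ae G.measureReal_eq]
    with ω hω
  by_cases hnear : G.near 1 (ω i) (ω j)
  · have hvol := G.vol_pos.ne'
    rw [G.integral_comp_card_nbrs_update hij hnear hω, nbhdDensity, moveImageDensity, if_pos hnear,
      if_pos hnear]
    field_simp
  · simp only [nbhdDensity, moveImageDensity, if_neg hnear, zero_mul, mul_zero]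

theorem integral_pairMean_snd (hij : i ≠ j) :
    ∫ ω, G.pairMean q i j (fun a => h a.2) ω ∂Measure.pi (fun _ => μ) =
      ∫ ω, h ω * (1 - q (G.nbrs ω i).card + G.moveImageDensity q i j ω)
        ∂Measure.pi fun _ => μ := by
  have hstay := (hh.mul (G.bddMeasurable_one_sub_comp_card_nbrs hq i)).integrable
    (Measure.pi fun _ => μ)
  have hmove := (G.bddMeasurable_comp_card_nbrs hq i).mul
    (((G.bddMeasurable_nbhdDensity_apply i).mul (hh.update j)).integral_right μ)
  have himage := hh.mul (G.bddMeasurable_moveImageDensity hq i j)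
  simp only [pairMean, mul_add, mul_comm (1 - q _)]
  rw [integral_add hstay (hmove.integrable _), integral_add hstay (himage.integrable _),
    G.integral_move_eq hq hh hij]

theorem integral_snd_coupling (hn : 2 ≤ n) {c : ℝ}
    (hc : ∀ k ≤ n - 1, 1 - q k + k / (n - 1 : ℕ) *
      (q k + (1 - G.vol 1) / G.vol 1 * q (k - 1)) = c * if 0 < k then 1 else 0) :
    ∫ a, h a.2 ∂G.coupling n q = c / n * ∫ ω, G.count ω * h ω ∂Measure.pi fun _ => μ := by
  have hint (ij : Fin n × Fin n) := (hh.mul ((G.bddMeasurable_one_sub_comp_card_nbrs hq ij.1).add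
    (G.bddMeasurable_moveImageDensity hq ij.1 ij.2))).integrable (Measure.pi fun _ => μ)
  have hn1 : (n : ℝ) - 1 ≠ 0 := by
    have : (2 : ℝ) ≤ n := by exact_mod_cast hn
    linarith
  rw [G.integral_coupling hq (hh.comp measurable_snd), Finset.sum_congr rfl fun ij hij =>
      G.integral_pairMean_snd hq hh (Finset.mem_offDiag.1 hij).2.2,
    ← integral_finsetSum _ fun ij _ => hint ij]
  simp only [← Finset.mul_sum, G.sum_offDiag_moveImageDensity hn hc, mul_left_comm (h _),
    integral_const_mul, Nat.cast_pred (by omega : 0 < n)]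
  simp only [mul_comm (h _)]
  field_simp

end SizeBias

section SizeBiasCoupling

variable {E : Type*} [MeasurableSpace E] {μ : Measure E} (G : Proximity μ) {n : ℕ}

/-- The law of a configuration of `n` points together with a modification of it under which the
number of nonisolated points has its size-biased distribution. -/
def sizeBiasCoupling (n : ℕ) : Measure ((Fin n → E) × (Fin n → E)) :=
  G.coupling n (moveProb (n - 1) ((1 - G.vol 1) / G.vol 1))

theorem ae_abs_count_sub_le :
    ∀ᵐ a ∂G.sizeBiasCoupling n, |G.count a.2 - G.count a.1| ≤ G.kiss + 1 := by
  have hcount := (G.bddMeasurable_count (n := n)).measurable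
  refine G.ae_coupling (measurableSet_le ((hcount.comp measurable_snd).sub
    (hcount.comp measurable_fst)).abs measurable_const) (fun ω => ?_)
    fun ω j z => G.abs_count_update_sub_count_le
  rw [sub_self, abs_zero]
  positivity

variable (hn : 2 ≤ n)
include hn

theorem sizeBiasProb_mem_Icc (k : ℕ) :
    moveProb (n - 1) ((1 - G.vol 1) / G.vol 1) k ∈ Icc (0 : ℝ) 1 :=
  moveProb_mem_Icc (div_pos (sub_pos.2 G.vol_lt_one) G.vol_pos) (by omega) k

variable [IsProbabilityMeasure μ]

theorem measurePreserving_fst_sizeBiasCoupling :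
    MeasurePreserving Prod.fst (G.sizeBiasCoupling n) (Measure.pi fun _ => μ) :=
  G.measurePreserving_fst_coupling (G.sizeBiasProb_mem_Icc hn) hn

theorem isProbabilityMeasure_sizeBiasCoupling : IsProbabilityMeasure (G.sizeBiasCoupling n) :=
  G.isProbabilityMeasure_coupling (G.sizeBiasProb_mem_Icc hn) hn

theorem exists_integral_snd_sizeBiasCoupling :
    ∃ c : ℝ, ∀ h : (Fin n → E) → ℝ, BddMeasurable h →
      ∫ a, h a.2 ∂G.sizeBiasCoupling n = c * ∫ ω, G.count ω * h ω ∂Measure.pi fun _ => μ :=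
  ⟨_, fun _ hh => G.integral_snd_coupling (G.sizeBiasProb_mem_Icc hn) hh hn fun _ hk =>
    moveProb_recursion (div_pos (sub_pos.2 G.vol_lt_one) G.vol_pos) (by omega) hk⟩

theorem integral_count_mul_sizeBiasCoupling {g : ℝ → ℝ} (hg : BddMeasurable g) :
    ∫ a, G.count a.1 * g (G.count a.1) ∂G.sizeBiasCoupling n =
      (∫ a, G.count a.1 ∂G.sizeBiasCoupling n) * ∫ a, g (G.count a.2) ∂G.sizeBiasCoupling n := by
  have hcount := G.bddMeasurable_count (n := n)
  have hgcount := hg.comp hcount.measurable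
  have := G.isProbabilityMeasure_sizeBiasCoupling hn
  obtain ⟨c, hc⟩ := G.exists_integral_snd_sizeBiasCoupling hn
  have hnormalized : c * ∫ ω, G.count ω ∂Measure.pi (fun _ : Fin n => μ) = 1 := by
    simpa using (hc _ (.const 1)).symm
  have hfst {h : (Fin n → E) → ℝ} (hh : BddMeasurable h) :=
    G.integral_fst_coupling (G.sizeBiasProb_mem_Icc hn) hn hh
  rw [sizeBiasCoupling, hfst hcount, hfst (hcount.mul hgcount), ← sizeBiasCoupling, hc _ hgcount,
    ← mul_assoc, mul_comm _ c, hnormalized, one_mul]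

theorem variance_condExp_sizeBiasCoupling_le :
    Var[(G.sizeBiasCoupling n)[fun a => G.count a.2 - G.count a.1 |
      Real.measurableSpace.comap fun a => G.count a.1]; G.sizeBiasCoupling n] ≤
      G.driftBound n / n := by
  have hq := G.sizeBiasProb_mem_Icc hn
  have hcount := G.bddMeasurable_count (n := n)
  have := G.isProbabilityMeasure_sizeBiasCoupling hn
  exact (variance_condExp_comap_comp_le (G.measurePreserving_fst_sizeBiasCoupling hn)
    ((hcount.comp measurable_snd).sub (hcount.comp measurable_fst)) (G.bddMeasurable_drift hq)
    (fun _ => G.setIntegral_coupling hq) hcount.measurable).trans (G.variance_drift_le hq hn)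

end SizeBiasCoupling

end Proximity

section KissingNumber

variable {d : ℕ}

theorem bddAbove_kappa (d : ℕ) : BddAbove {k : ℕ | ∃ c : Fin k → EuclideanSpace ℝ (Fin d),
    (∀ i, (closedBall (c i) 1 ∩ closedBall 0 1).Nonempty) ∧
    Pairwise fun i j => Disjoint (closedBall (c i) 1) (closedBall (c j) 1)} := by
  refine ⟨3 ^ d, ?_⟩
  rintro k ⟨c, hmeet, hdisj⟩
  have hsub : (⋃ i, closedBall (c i) 1) ⊆ closedBall (0 : EuclideanSpace ℝ (Fin d)) 3 := by
    refine iUnion_subset fun i => closedBall_subset_closedBall' ?_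
    obtain ⟨w, hwi, hw0⟩ := hmeet i
    have htri := dist_triangle_left (c i) 0 w
    rw [mem_closedBall] at hwi hw0
    linarith
  have hvol := measure_mono (μ := volume) hsub
  simp only [measure_iUnion hdisj fun _ => measurableSet_closedBall,
    Measure.addHaar_closedBall _ _ zero_le_one, Measure.addHaar_closedBall _ _ zero_le_three,
    one_pow, ENNReal.ofReal_one, one_mul, tsum_fintype, Finset.sum_const, Finset.card_univ,
    Fintype.card_fin, nsmul_eq_mul, finrank_euclideanSpace] at hvol
  rw [ENNReal.mul_le_mul_iff_left (measure_ball_pos _ _ one_pos).ne' measure_ball_lt_top.ne,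
    ENNReal.ofReal_pow zero_le_three, ENNReal.ofReal_ofNat] at hvol
  exact_mod_cast hvol

theorem le_kappa {k : ℕ} (c : Fin k → EuclideanSpace ℝ (Fin d)) {r : ℝ} (hr : 0 < r)
    (hnorm : ∀ i, ‖c i‖ ≤ r) (hsep : Pairwise fun i j => r < dist (c i) (c j)) :
    k ≤ kappa d := by
  have hscale : 0 ≤ 2 / r := by positivity
  refine le_csSup (bddAbove_kappa d) ⟨fun i => (2 / r) • c i, fun i => ?_, fun i j hij => ?_⟩
  · have hle : r⁻¹ * ‖c i‖ ≤ 1 := (inv_mul_le_one₀ hr).2 (hnorm i)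
    refine ⟨r⁻¹ • c i, ?_, ?_⟩
    · rw [mem_closedBall, dist_eq_norm, ← sub_smul, norm_smul, Real.norm_eq_abs,
        show r⁻¹ - 2 / r = -r⁻¹ by ring, abs_neg, abs_of_pos (inv_pos.2 hr)]
      exact hle
    · rwa [mem_closedBall_zero_iff, norm_smul, Real.norm_eq_abs, abs_of_pos (inv_pos.2 hr)]
  · refine closedBall_disjoint_closedBall ?_
    rw [dist_smul₀, Real.norm_eq_abs, abs_of_nonneg hscale, div_mul_eq_mul_div, lt_div_iff₀ hr]
    linarith [hsep hij]

theorem two_le_kappa (hd : 1 ≤ d) : 2 ≤ kappa d := by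
  set e : EuclideanSpace ℝ (Fin d) := EuclideanSpace.single ⟨0, hd⟩ 1 with he
  have hnorm : ‖e‖ = 1 := by simp [he]
  refine le_kappa (fun i : Fin 2 => (if i = 0 then (1 : ℝ) else -1) • e) one_pos (fun i => ?_)
    fun i j hij => ?_
  · rw [norm_smul, hnorm]
    split_ifs <;> norm_num
  · beta_reduce
    rw [dist_eq_norm, ← sub_smul, norm_smul, hnorm]
    fin_cases i <;> fin_cases j <;> simp at hij ⊢ <;> norm_num

end KissingNumber

theorem phi_nonneg {d : ℕ} {r : ℝ} (hr : 0 ≤ r) : 0 ≤ phi d r :=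
  mul_nonneg ENNReal.toReal_nonneg (pow_nonneg hr d)

section Torus

variable {d : ℕ} {L : ℝ}

/-- The projection of `ℝ^d` onto the Euclidean torus `(ℝ / L ℤ)^d`; it turns `torDist` into a
genuine metric. -/
def toTorus (L : ℝ) (x : Fin d → ℝ) : PiLp 2 fun _ : Fin d => AddCircle L :=
  WithLp.toLp 2 fun i => (x i : AddCircle L)

theorem iInf_abs_sub_int_mul_eq_norm (hL : 0 < L) (t : ℝ) :
    ⨅ k : ℤ, |t - k * L| = ‖(t : AddCircle L)‖ := by
  have hscale (k : ℤ) : |t - k * L| = |L⁻¹ * t - k| * L := by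
    rw [← abs_of_pos hL, ← abs_mul, abs_of_pos hL, sub_mul, mul_right_comm,
      inv_mul_cancel₀ hL.ne', one_mul]
  rw [AddCircle.norm_eq]
  refine le_antisymm (ciInf_le ⟨0, ?_⟩ _) (le_ciInf fun k => ?_)
  · rintro _ ⟨k, rfl⟩
    exact abs_nonneg _
  · rw [hscale, hscale]
    exact mul_le_mul_of_nonneg_right (round_le _ _) hL.le

theorem torDist_eq_dist (hL : 0 < L) (x y : Fin d → ℝ) :
    torDist L x y = dist (toTorus L x) (toTorus L y) := by
  rw [torDist, PiLp.dist_eq_of_L2]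
  simp only [iInf_abs_sub_int_mul_eq_norm hL, dist_eq_norm]
  rfl

theorem toTorus_zero : toTorus L (0 : Fin d → ℝ) = 0 :=
  rfl

theorem toTorus_sub (x y : Fin d → ℝ) : toTorus L (x - y) = toTorus L x - toTorus L y :=
  rfl

theorem norm_toTorus_le (u : Fin d → ℝ) : ‖toTorus L u‖ ≤ ‖WithLp.toLp 2 u‖ := by
  rw [PiLp.norm_eq_of_L2, PiLp.norm_eq_of_L2]
  exact Real.sqrt_le_sqrt (Finset.sum_le_sum fun i _ =>
    pow_le_pow_left₀ (norm_nonneg _) QuotientAddGroup.norm_mk_le_norm 2)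

theorem norm_toTorus_eq (hL : 0 < L) {u : Fin d → ℝ} (hu : ∀ i, |u i| ≤ L / 2) :
    ‖toTorus L u‖ = ‖WithLp.toLp 2 u‖ := by
  have habs (i : Fin d) : ‖(u i : AddCircle L)‖ = ‖u i‖ :=
    (AddCircle.norm_coe_eq_abs_iff L hL.ne').2 (by rw [abs_of_pos hL]; exact hu i)
  simp only [PiLp.norm_eq_of_L2, toTorus, habs]

theorem exists_toTorus_eq_norm_eq (L : ℝ) (x : Fin d → ℝ) :
    ∃ u : Fin d → ℝ, toTorus L u = toTorus L x ∧ ‖WithLp.toLp 2 u‖ = ‖toTorus L x‖ := by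
  refine ⟨fun i => x i - round (L⁻¹ * x i) * L, ?_, ?_⟩
  · simp only [toTorus, ← zsmul_eq_mul, AddCircle.coe_sub, AddCircle.coe_zsmul,
      AddCircle.coe_period, smul_zero, sub_zero]
  · simp only [PiLp.norm_eq_of_L2, toTorus, AddCircle.norm_eq, Real.norm_eq_abs, sq_abs]

theorem continuous_toTorus : Continuous (toTorus L : (Fin d → ℝ) → _) := by
  refine (PiLp.continuous_toLp 2 _).comp (continuous_pi fun i => ?_)
  exact (AddCircle.continuous_mk' L).comp (continuous_apply i)

theorem le_kappa_of_torDist (hL : 0 < L) {ρ : ℝ} (hρ : 0 < ρ) {k : ℕ} (c : Fin k → Fin d → ℝ)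
    (z : Fin d → ℝ) (hnear : ∀ i, torDist L z (c i) ≤ ρ)
    (hsep : Pairwise fun i j => ρ < torDist L (c i) (c j)) : k ≤ kappa d := by
  choose u hu hnorm using fun i => exists_toTorus_eq_norm_eq L (c i - z)
  refine le_kappa (fun i => WithLp.toLp 2 (u i)) hρ (fun i => ?_) fun i j hij =>
    (hsep hij).trans_le ?_
  · rw [hnorm, toTorus_sub, ← dist_eq_norm, dist_comm, ← torDist_eq_dist hL]
    exact hnear i
  · calc torDist L (c i) (c j) = ‖toTorus L (u i - u j)‖ := by
          rw [torDist_eq_dist hL, dist_eq_norm, toTorus_sub, hu, hu, toTorus_sub, toTorus_sub,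
            sub_sub_sub_cancel_right]
      _ ≤ dist (WithLp.toLp 2 (u i)) (WithLp.toLp 2 (u j)) := by
          rw [dist_eq_norm]
          exact norm_toTorus_le _

theorem measurableSet_box : MeasurableSet (box d L) :=
  .univ_pi fun _ => measurableSet_Ico

theorem volume_box : volume (box d L) = ENNReal.ofReal L ^ d := by
  simp [box, volume_pi_pi]

theorem isClosed_toLp_preimage_closedBall (x : Fin d → ℝ) (r : ℝ) :
    IsClosed (WithLp.toLp 2 ⁻¹' closedBall (toTorus L x) r) :=
  isClosed_closedBall.preimage (PiLp.continuous_toLp 2 _)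

section Volume

variable [hL : Fact (0 < L)]

theorem volume_torDist_le_inter (a x : Fin d → ℝ) (r : ℝ) :
    volume ({y | torDist L x y ≤ r} ∩ univ.pi fun i => Ioc (a i) (a i + L)) =
      volume (WithLp.toLp 2 ⁻¹' closedBall (toTorus L x) r) := by
  have hball := (isClosed_toLp_preimage_closedBall (L := L) x r).measurableSet
  have hmk := measurePreserving_pi (fun i : Fin d => volume.restrict (Ioc (a i) (a i + L)))
    (fun _ => (volume : Measure (AddCircle L))) fun i => AddCircle.measurePreserving_mk L (a i)
  rw [volume_pi (α := fun _ => AddCircle L), ← hmk.measure_preimage hball.nullMeasurableSet,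
    ← Measure.restrict_pi_pi, Measure.restrict_apply (hmk.measurable hball)]
  simp only [torDist_eq_dist hL.out, dist_comm (toTorus L x)]
  rfl

theorem volume_torBall (x : Fin d → ℝ) (r : ℝ) :
    volume (torBall L x r) = volume (WithLp.toLp 2 ⁻¹' closedBall (toTorus L x) r) := by
  have hbox : torBall L x r = {y | torDist L x y ≤ r} ∩ univ.pi fun _ => Ico 0 L := by
    ext y
    exact and_comm
  have hIco : (univ.pi fun _ : Fin d => Ico 0 L) =ᵐ[volume] univ.pi fun _ => Ioc 0 L :=
    Measure.univ_pi_Ico_ae_eq_Icc.trans Measure.univ_pi_Ioc_ae_eq_Icc.symm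
  rw [hbox, measure_congr ((ae_eq_refl _).inter hIco), ← volume_torDist_le_inter 0]
  simp only [Pi.zero_apply, zero_add]

theorem volume_torBall_eq (x : Fin d → ℝ) (r : ℝ) :
    volume (torBall L x r) = volume (torBall L (0 : Fin d → ℝ) r) := by
  rw [volume_torBall, volume_torBall, ← measure_preimage_add volume fun i => (x i : AddCircle L)]
  congr 1 with θ
  rw [mem_preimage, mem_preimage, WithLp.toLp_add, ← toTorus, mem_closedBall, dist_self_add_left,
    toTorus_zero, mem_preimage, mem_closedBall_zero_iff]

theorem volume_torBall_pos (x : Fin d → ℝ) {r : ℝ} (hr : 0 < r) : 0 < volume (torBall L x r) := by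
  have hopen : IsOpen (WithLp.toLp 2 ⁻¹' ball (toTorus L x) r) :=
    isOpen_ball.preimage (PiLp.continuous_toLp 2 _)
  rw [volume_torBall]
  exact (hopen.measure_pos volume ⟨fun i => (x i : AddCircle L), mem_ball_self hr⟩).trans_le
    (measure_mono (preimage_mono ball_subset_closedBall))

theorem volume_torBall_le (x : Fin d → ℝ) {r : ℝ} (hr : 0 ≤ r) :
    volume (torBall L x r) ≤ ENNReal.ofReal (phi d r) := by
  have hball : {y | torDist L 0 y ≤ r} ∩ univ.pi (fun _ : Fin d => Ioc (-(L / 2)) (-(L / 2) + L)) ⊆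
      WithLp.toLp 2 ⁻¹' closedBall (0 : EuclideanSpace ℝ (Fin d)) r := by
    rintro y ⟨hy, hbox⟩
    have habs (i : Fin d) : |y i| ≤ L / 2 :=
      abs_le.2 ⟨(hbox i trivial).1.le, by linarith [(hbox i trivial).2]⟩
    rwa [mem_ofPred_eq, torDist_eq_dist hL.out, toTorus_zero, dist_zero_left,
      norm_toTorus_eq hL.out habs, ← mem_closedBall_zero_iff] at hy
  rw [volume_torBall_eq, volume_torBall, ← volume_torDist_le_inter fun _ => -(L / 2)]
  refine (measure_mono hball).trans_eq ?_
  rw [(PiLp.volume_preserving_toLp (Fin d)).measure_preimage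
      measurableSet_closedBall.nullMeasurableSet, Measure.addHaar_closedBall' _ _ hr,
    finrank_euclideanSpace, Fintype.card_fin, phi, unitBallVol, mul_comm, ENNReal.ofReal_mul
      ENNReal.toReal_nonneg, ENNReal.ofReal_toReal measure_closedBall_lt_top.ne]

theorem measureReal_torBall_le (x : Fin d → ℝ) {r : ℝ} (hr : 0 ≤ r) :
    volume.real (torBall L x r) ≤ phi d r :=
  ENNReal.toReal_le_of_le_ofReal (phi_nonneg hr) (volume_torBall_le x hr)

end Volume

end Torus

theorem ae_injective_pi {ι E : Type*} [Fintype ι] [MeasurableSpace E] [MeasurableEq E]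
    (μ : Measure E) [IsProbabilityMeasure μ] [NullSingletonClass μ] :
    ∀ᵐ ω ∂Measure.pi fun _ : ι => μ, Function.Injective ω := by
  have hne (i j : ι) (hij : i ≠ j) : ∀ᵐ ω ∂Measure.pi fun _ : ι => μ, ω i ≠ ω j := by
    have hupdate := measurePreserving_update (fun _ : ι => μ) i
    have hmeas : MeasurableSet {ω : ι → E | ω i = ω j} :=
      measurableSet_eq_fun (measurable_pi_apply i) (measurable_pi_apply j)
    rw [ae_iff]
    simp only [not_not]
    rw [← hupdate.measure_preimage hmeas.nullMeasurableSet,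
      Measure.measure_prod_null (hupdate.measurable hmeas)]
    refine Eventually.of_forall fun ω =>
      measure_mono_null (fun x hx => ?_) (measure_singleton (ω j))
    simpa [Function.update_of_ne hij.symm] using hx
  filter_upwards [ae_all_iff.2 fun i => ae_all_iff.2 fun j => ae_all_iff.2 (hne i j)] with ω hω
    i j hij
  by_contra hcon
  exact hω i j hcon hij

section UniformBox

variable {d : ℕ} {L : ℝ}

theorem uniformBox_apply (s : Set (Fin d → ℝ)) :
    uniformBox d L s = ((L.toNNReal ^ d)⁻¹ : ℝ≥0) * volume (s ∩ box d L) := by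
  rw [uniformBox, Measure.smul_apply, Measure.restrict_apply' measurableSet_box]
  rfl

theorem ae_mem_box : ∀ᵐ x ∂uniformBox d L, x ∈ box d L :=
  Measure.ae_smul_measure (ae_restrict_mem measurableSet_box) _

theorem nullSingletonClass_uniformBox (hd : 1 ≤ d) : NullSingletonClass (uniformBox d L) where
  measure_singleton x := by
    have : Nonempty (Fin d) := ⟨⟨0, hd⟩⟩
    rw [uniformBox_apply, measure_mono_null inter_subset_left (measure_singleton x), mul_zero]

variable [hL : Fact (0 < L)]

theorem measureReal_uniformBox (s : Set (Fin d → ℝ)) :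
    (uniformBox d L).real s = volume.real (s ∩ box d L) / L ^ d := by
  rw [measureReal_def, uniformBox_apply, ENNReal.toReal_mul, ENNReal.coe_toReal, NNReal.coe_inv,
    NNReal.coe_pow, Real.coe_toNNReal L hL.out.le, inv_mul_eq_div, ← measureReal_def]

instance isProbabilityMeasure_uniformBox : IsProbabilityMeasure (uniformBox d L) where
  measure_univ := by
    have hne : L.toNNReal ^ d ≠ 0 := (pow_pos (Real.toNNReal_pos.2 hL.out) d).ne'
    rw [uniformBox_apply, univ_inter, volume_box, ENNReal.ofReal, ← ENNReal.coe_pow,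
      ← ENNReal.coe_mul, inv_mul_cancel₀ hne, ENNReal.coe_one]

end UniformBox

section TorusProximity

variable {d : ℕ} {L ρ : ℝ} [hL : Fact (0 < L)]

theorem isClosed_torDist_le (r : ℝ) :
    IsClosed {q : (Fin d → ℝ) × (Fin d → ℝ) | torDist L q.1 q.2 ≤ r} := by
  simp only [torDist_eq_dist hL.out]
  exact isClosed_le ((continuous_toTorus.comp continuous_fst).dist
    (continuous_toTorus.comp continuous_snd)) continuous_const

theorem measureReal_uniformBox_torBall (x : Fin d → ℝ) (r : ℝ) :
    (uniformBox d L).real (torBall L x r) =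
      volume.real (torBall L (0 : Fin d → ℝ) r) / L ^ d := by
  have hsub : torBall L x r ⊆ box d L := fun _ hz => hz.1
  rw [measureReal_uniformBox, inter_eq_left.2 hsub, measureReal_def, volume_torBall_eq,
    ← measureReal_def]

theorem measureReal_torBall_pos {r : ℝ} (hr : 0 < r) :
    0 < volume.real (torBall L (0 : Fin d → ℝ) r) :=
  ENNReal.toReal_pos (volume_torBall_pos 0 hr).ne'
    ((volume_torBall_le 0 hr.le).trans_lt ENNReal.ofReal_lt_top).ne

theorem torDist_comm (x y : Fin d → ℝ) : torDist L x y = torDist L y x := by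
  rw [torDist_eq_dist hL.out, torDist_eq_dist hL.out, dist_comm]

theorem torDist_triangle (x y z : Fin d → ℝ) :
    torDist L x z ≤ torDist L x y + torDist L y z := by
  simpa only [torDist_eq_dist hL.out] using dist_triangle _ _ _

theorem torDist_self (x : Fin d → ℝ) : torDist L x x = 0 := by
  rw [torDist_eq_dist hL.out, dist_self]

theorem measurableSet_mem_torBall (r : ℝ) :
    MeasurableSet {q : (Fin d → ℝ) × (Fin d → ℝ) | q.1 ∈ box d L ∧ q.2 ∈ torBall L q.1 r} :=
  (measurable_fst measurableSet_box).inter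
    ((measurable_snd measurableSet_box).inter (isClosed_torDist_le r).measurableSet)

/-- The proximity relation of the torus `[0, L)^d`: `near k x y` means that `x` and `y` are points
of the box at toroidal distance at most `k * ρ`, and the ghost is a point outside the box. -/
def torusProximity (hd : 1 ≤ d) (hρ : 0 < ρ) (hphi : phi d ρ < L ^ d) :
    Proximity (uniformBox d L) where
  near k x y := x ∈ box d L ∧ y ∈ torBall L x (k * ρ)
  symm h := ⟨h.2.1, h.1, by rw [torDist_comm]; exact h.2.2⟩
  trans {a b x y z} hxy hyz := ⟨hxy.1, hyz.2.1, by
    rw [Nat.cast_add, add_mul]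
    exact (torDist_triangle x y z).trans (add_le_add hxy.2.2 hyz.2.2)⟩
  mono hab h := ⟨h.1, h.2.1, h.2.2.trans (by gcongr)⟩
  measurableSet_near k := measurableSet_mem_torBall _
  ghost := fun _ => -1
  not_near_ghost h := absurd (h.2.1 ⟨0, hd⟩ trivial).1 (by norm_num)
  vol k := volume.real (torBall L (0 : Fin d → ℝ) (k * ρ)) / L ^ d
  measureReal_le k x := (measureReal_mono fun _ hz => hz.2).trans_eq
    (measureReal_uniformBox_torBall x _)
  measureReal_eq := by
    filter_upwards [ae_mem_box] with x hx
    simp only [hx, true_and]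
    exact measureReal_uniformBox_torBall x _
  vol_pos := div_pos (measureReal_torBall_pos (by simpa using hρ)) (pow_pos hL.out d)
  vol_lt_one := by
    rw [Nat.cast_one, one_mul, div_lt_one (pow_pos hL.out d)]
    exact (measureReal_torBall_le 0 hρ.le).trans_lt hphi
  kiss := kappa d
  le_kiss c z hnear hsep := by
    simp only [Nat.cast_one, one_mul] at hnear hsep
    refine le_kappa_of_torDist hL.out hρ c z (fun i => (hnear i).2.2) fun i j hij => ?_
    by_contra! hle
    exact hsep hij ⟨(hnear i).2.1, (hnear j).2.1, hle⟩

variable (hd : 1 ≤ d) (hρ : 0 < ρ) (hphi : phi d ρ < L ^ d) {n : ℕ} {ω : Fin n → Fin d → ℝ}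
  {i : Fin n}

theorem vol_torusProximity_le (k : ℕ) :
    (torusProximity hd hρ hphi).vol k ≤ k ^ d * phi d ρ / L ^ d := by
  have hscale : phi d (k * ρ) = k ^ d * phi d ρ := by
    rw [phi, phi, mul_pow]
    ring
  rw [← hscale]
  exact div_le_div_of_nonneg_right (measureReal_torBall_le 0 (by positivity))
    (pow_pos hL.out d).le

theorem range_inter_torBall_eq_singleton_iff (hinj : Function.Injective ω)
    (hbox : ∀ i, ω i ∈ box d L) :
    range ω ∩ torBall L (ω i) ρ = {ω i} ↔ i ∉ (torusProximity hd hρ hphi).nonisolated ω := by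
  have hself : ω i ∈ torBall L (ω i) ρ := ⟨hbox i, (torDist_self _).trans_le hρ.le⟩
  have hnear {j : Fin n} : j ∈ (torusProximity hd hρ hphi).nbrs ω i ↔
      j ≠ i ∧ ω j ∈ torBall L (ω i) ρ := by
    simp [Proximity.mem_nbrs, torusProximity, hbox]
  rw [Proximity.mem_nonisolated, Finset.not_nonempty_iff_eq_empty,
    Finset.eq_empty_iff_forall_notMem, eq_singleton_iff_unique_mem,
    and_iff_right ⟨mem_range_self i, hself⟩]
  simp only [hnear, not_and, mem_inter_iff, and_imp, forall_mem_range, hinj.eq_iff, not_imp_not,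
    ne_eq]

end TorusProximity

theorem count_torusProximity {d n : ℕ} {ρ : ℝ} [Fact (0 < sideLen d n)] (hd : 1 ≤ d) (hρ : 0 < ρ)
    (hphi : phi d ρ < sideLen d n ^ d) {ω : Fin n → Fin d → ℝ} (hinj : Function.Injective ω)
    (hbox : ∀ i, ω i ∈ box d (sideLen d n)) :
    (torusProximity hd hρ hphi).count ω = n - isolCount d n ρ ω := by
  simp only [isolCount, range_inter_torBall_eq_singleton_iff hd hρ hphi hinj hbox]
  set A := (torusProximity hd hρ hphi).nonisolated ω with hA
  have hcompl : (Finset.univ.filter fun i => i ∉ A) = Aᶜ := by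
    ext i
    simp
  rw [Finset.sum_boole, hcompl, eq_sub_iff_add_eq, Proximity.count, ← hA]
  exact_mod_cast A.card_add_card_compl.trans (Fintype.card_fin n)

theorem sideLen_pos {d n : ℕ} (hn : 0 < n) : 0 < sideLen d n :=
  Real.rpow_pos_of_pos (Nat.cast_pos.2 hn) _

theorem sideLen_pow {d n : ℕ} (hd : 1 ≤ d) : sideLen d n ^ d = n :=
  Real.rpow_inv_natCast_pow n.cast_nonneg (by omega)

theorem count_torusProximity_ae_eq {d n : ℕ} {ρ : ℝ} [Fact (0 < sideLen d n)] (hd : 1 ≤ d)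
    (hρ : 0 < ρ) (hphi : phi d ρ < sideLen d n ^ d) :
    (torusProximity hd hρ hphi).count =ᵐ[binppLaw d n] fun ω => n - isolCount d n ρ ω := by
  have := nullSingletonClass_uniformBox (L := sideLen d n) hd
  have hbox : ∀ᵐ ω ∂binppLaw d n, ∀ i, ω i ∈ box d (sideLen d n) := ae_all_iff.2 fun i =>
    (measurePreserving_eval (fun _ => uniformBox d (sideLen d n)) i).quasiMeasurePreserving.ae
      ae_mem_box
  filter_upwards [ae_injective_pi (uniformBox d (sideLen d n)), hbox] with ω
  exact count_torusProximity hd hρ hphi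

namespace Proximity

variable {E : Type*} [MeasurableSpace E] {μ : Measure E} (G : Proximity μ) {n : ℕ} {t : ℝ}

theorem vol_nonneg (k : ℕ) : 0 ≤ G.vol k :=
  measureReal_nonneg.trans (G.measureReal_le k G.ghost)

theorem driftBound_le (hkiss : 2 ≤ G.kiss) (hvol₂ : n * G.vol 2 ≤ 2 / 3 * t)
    (hvol₃ : n * G.vol 3 ≤ t) :
    G.driftBound n ≤ 2 * (1 + 2 * G.kiss) ^ 2 * (1 + 3 * t + 2 * t ^ 2) := by
  have ht : 0 ≤ t := (mul_nonneg n.cast_nonneg (G.vol_nonneg 3)).trans hvol₃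
  have hvol (k : ℕ) : 0 ≤ n * G.vol k := mul_nonneg n.cast_nonneg (G.vol_nonneg k)
  have hkiss' : (2 : ℝ) ≤ G.kiss := by exact_mod_cast hkiss
  set m : ℝ := 2 * G.kiss + 1 with hm
  have hb : (G.kiss + 1 : ℝ) ≤ 3 / 5 * m := by linarith
  have hmean_nonneg : 0 ≤ n * G.influenceMean :=
    mul_nonneg n.cast_nonneg (add_nonneg (mul_nonneg (by positivity) (G.vol_nonneg 3))
      (mul_nonneg (by positivity) (G.vol_nonneg 2)))
  have hmean : n * G.influenceMean ≤ 7 / 5 * m * t :=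
    calc n * G.influenceMean = m * (n * G.vol 3) + (G.kiss + 1) * (n * G.vol 2) := by
          rw [influenceMean]
          ring
      _ ≤ m * t + 3 / 5 * m * (2 / 3 * t) := by
          gcongr
          exact hvol 2
      _ = 7 / 5 * m * t := by ring
  have hsecond : n * G.influenceSecondMoment ≤ 51 / 25 * m ^ 2 * t :=
    calc n * G.influenceSecondMoment = m ^ 2 * (n * G.vol 3) +
          ((G.kiss + 1) ^ 2 + 2 * m * (G.kiss + 1)) * (n * G.vol 2) := by
          rw [influenceSecondMoment]
          ring
      _ ≤ m ^ 2 * t + ((3 / 5 * m) ^ 2 + 2 * m * (3 / 5 * m)) * (2 / 3 * t) := by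
          gcongr
          exact hvol 2
      _ = 51 / 25 * m ^ 2 * t := by ring
  calc G.driftBound n
      ≤ (2 * (3 / 5 * m)) ^ 2 + 2 * (2 * (3 / 5 * m)) * (7 / 5 * m * t) + (7 / 5 * m * t) ^ 2 +
          51 / 25 * m ^ 2 * t := by
        rw [driftBound]
        gcongr
    _ = m ^ 2 * (36 / 25 + 27 / 5 * t + 49 / 25 * t ^ 2) := by ring
    _ ≤ m ^ 2 * (2 + 6 * t + 4 * t ^ 2) := by
        gcongr <;> norm_num
    _ = 2 * (1 + 2 * G.kiss) ^ 2 * (1 + 3 * t + 2 * t ^ 2) := by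
        rw [hm]
        ring

end Proximity

theorem two_le_two_mul_sub_div_sub {n x : ℝ} (hx : 0 ≤ x) (hxn : x < n) :
    2 ≤ (2 * n - x) / (n - x) := by
  rw [le_div_iff₀ (by linarith)]
  linarith

theorem three_mul_two_pow_le_two_mul_three_pow {d : ℕ} (hd : 1 ≤ d) :
    3 * (2 : ℝ) ^ d ≤ 2 * 3 ^ d := by
  obtain ⟨m, rfl⟩ := Nat.exists_eq_add_of_le' hd
  have hpow : (2 : ℝ) ^ m ≤ 3 ^ m := by gcongr; norm_num
  rw [pow_succ, pow_succ]
  linarith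

theorem le_etaS {d n : ℕ} (hd : 1 ≤ d) (hn : 1 < n) {ρ : ℝ} (hρ : 0 ≤ ρ)
    (h₃ : 3 ^ d * phi d ρ < n) (h₂ : (2 ^ (d + 1) + 1) * phi d ρ < n) :
    2 * (1 + 2 * (kappa d : ℝ)) ^ 2 *
      (1 + 3 * (3 ^ d * phi d ρ) + 2 * (3 ^ d * phi d ρ) ^ 2) ≤ etaS d n ρ := by
  have hn' : (1 : ℝ) < n := by exact_mod_cast hn
  have hphi := phi_nonneg (d := d) hρ
  have hpow : (2 : ℝ) ≤ 2 ^ d := le_self_pow₀ one_le_two (by omega)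
  have hlinear : 3 * (3 ^ d * phi d ρ) ≤ (2 ^ d + 1) * 3 ^ d * phi d ρ := by
    rw [mul_assoc]
    gcongr
    linarith
  have hquadratic : 2 * (3 ^ d * phi d ρ) ^ 2 ≤
      (2 * n - 3 ^ d * phi d ρ) / (n - 3 ^ d * phi d ρ) * 9 ^ d * phi d ρ ^ 2 := by
    rw [mul_assoc, show (9 : ℝ) = 3 ^ 2 by norm_num, ← pow_mul, mul_comm 2 d, pow_mul, ← mul_pow]
    gcongr
    exact two_le_two_mul_sub_div_sub (by positivity) h₃
  have hratio : 0 ≤ (2 * n - (2 ^ (d + 1) + 1) * phi d ρ) / (n - (2 ^ (d + 1) + 1) * phi d ρ) :=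
    zero_le_two.trans (two_le_two_mul_sub_div_sub (by positivity) h₂)
  have hlast : (0 : ℝ) ≤ (4 * n - 2) / (n - 1) := div_nonneg (by linarith) (by linarith)
  refine le_add_of_le_of_nonneg ?_ (by positivity)
  gcongr

theorem driftBound_torusProximity_le {d n : ℕ} {ρ : ℝ} [Fact (0 < sideLen d n)] (hd : 1 ≤ d)
    (hn : 1 < n) (hρ : 0 < ρ) (hphi : phi d ρ < sideLen d n ^ d) (h₃ : 3 ^ d * phi d ρ < n)
    (h₂ : (2 ^ (d + 1) + 1) * phi d ρ < n) :
    (torusProximity hd hρ hphi).driftBound n ≤ etaS d n ρ := by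
  have hvol (k : ℕ) : n * (torusProximity hd hρ hphi).vol k ≤ k ^ d * phi d ρ := by
    have := vol_torusProximity_le hd hρ hphi k
    rwa [sideLen_pow hd, le_div_iff₀' (by positivity)] at this
  refine (Proximity.driftBound_le _ (two_le_kappa hd) ((hvol 2).trans ?_) (hvol 3)).trans
    (le_etaS hd hn hρ.le h₃ h₂)
  have := mul_le_mul_of_nonneg_right (three_mul_two_pow_le_two_mul_three_pow hd)
    (phi_nonneg (d := d) hρ.le)
  push_cast
  linarith

/-- Proposition 6.1 together with the coupling of Section 4: there is a bounded
size-biased coupling `(W, W')` for the number `W = n - S` of nonisolated points with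
`Var(E[W' - W | W]) ≤ η_S(n,ρ)/n`. -/
theorem nonisolated_size_bias_coupling
    (d n : ℕ) (hd : 1 ≤ d) (hn : 4 ≤ n) (ρ : ℝ) (hρ : 0 < ρ)
    (hphi : max ((3 : ℝ) ^ d) (2 ^ (d + 1) + 1) * phi d ρ < n) :
    ∃ (Ω : Type) (_ : MeasurableSpace Ω) (Q : Measure Ω) (_ : IsProbabilityMeasure Q)
      (X X' : Ω → ℝ),
      Measurable X ∧ Measurable X' ∧
      Measure.map X Q = Measure.map (fun ω => (n : ℝ) - isolCount d n ρ ω) (binppLaw d n) ∧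
      (∀ g : ℝ → ℝ, Continuous g → (∃ C, ∀ x, |g x| ≤ C) →
        ∫ ω, X ω * g (X ω) ∂Q = (∫ ω, X ω ∂Q) * ∫ ω, g (X' ω) ∂Q) ∧
      (∀ᵐ ω ∂Q, |X' ω - X ω| ≤ (kappa d : ℝ) + 1) ∧
      variance (Q[fun ω => X' ω - X ω|MeasurableSpace.comap X Real.measurableSpace]) Q ≤
        etaS d n ρ / n := by
  have hphi_nonneg := phi_nonneg (d := d) hρ.le
  have h₃ : 3 ^ d * phi d ρ < n :=
    (mul_le_mul_of_nonneg_right (le_max_left _ _) hphi_nonneg).trans_lt hphi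
  have h₂ : (2 ^ (d + 1) + 1) * phi d ρ < n :=
    (mul_le_mul_of_nonneg_right (le_max_right _ _) hphi_nonneg).trans_lt hphi
  have hlt : phi d ρ < sideLen d n ^ d := by
    rw [sideLen_pow hd]
    exact (le_mul_of_one_le_left hphi_nonneg (one_le_pow₀ (by norm_num))).trans_lt h₃
  have : Fact (0 < sideLen d n) := ⟨sideLen_pos (by omega)⟩
  have hn₂ : 2 ≤ n := by omega
  let G := torusProximity hd hρ hlt
  have hcount : Measurable (G.count (n := n)) := G.bddMeasurable_count.measurable
  refine ⟨_, inferInstance, G.sizeBiasCoupling n, G.isProbabilityMeasure_sizeBiasCoupling hn₂,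
    fun a => G.count a.1, fun a => G.count a.2, hcount.comp measurable_fst,
    hcount.comp measurable_snd, ?_,
    fun g hg hbdd => G.integral_count_mul_sizeBiasCoupling hn₂ ⟨hg.measurable, hbdd⟩,
    G.ae_abs_count_sub_le, (G.variance_condExp_sizeBiasCoupling_le hn₂).trans ?_⟩
  · rw [← Measure.map_congr (count_torusProximity_ae_eq hd hρ hlt), binppLaw,
      ← (G.measurePreserving_fst_sizeBiasCoupling hn₂).map_eq,
      Measure.map_map hcount measurable_fst]
    rfl
  · gcongr
    exact driftBound_torusProximity_le hd (by omega) hρ hlt h₃ h₂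

end
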